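/- Let 𝒞 = {𝓛₁, 𝓛₂} be a pseudo-fibered pair and let g ∈ Aut(𝒞) be a nontrivial automorphism with more than two fixed points. Then there is a unique pair (𝒢₁, 𝒢₂), where 𝒢_i is a real gap of 𝓛_i for each i, such that 𝒢₁ and 𝒢₂ interleave, g preserves both 𝒢₁ and 𝒢₂, and v(𝒢₁) ∪ v(𝒢₂) = Fix(g). -/

import Mathlib

/-!
Why the theorem holds. The circle is cut by the fixed points of `g` into components `(u, v)` on which
`g` is a translation (`IsComp`). Quite fullness provides a leaf `K` of either system crossing such a
component (`LamSys.crossing`), and the images of `K` under the iterates of `g` and `g⁻¹` converge to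
leaves ending at `v` and at `u`, unless they collapse to a point (`adj_core`, `Acts.adj`). Hence each
component has an end that is an endpoint of the first system, and one that is an endpoint of the
second; by transversality there is exactly one of each kind. If `(s, o)` has its end `o` outside the
endpoints of `𝓛₁`, the limit leaf spans `(s, o)` and the next component `(o, e)`, and it is the
limit of leaves on its side, so `(s, e)` is not isolated in `𝓛₁`. These spans (`IsSpan`) follow one
another around the circle, and their middle points `o` are endpoints of `𝓛₂`.

In a loose system whose endpoints fill no interval, no point is an endpoint of three leaves
(`LamSys.no_three`). Therefore no leaf separates the endpoints of two consecutive spans, these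
endpoints determine a gap, and the sides of this gap next to a span are again spans. Since the sides
of an ideal polygon or of a crown form a single cycle or a single line (`LamSys.IsGap.conn`), all
of its sides are spans (`ActsPair.exists_gap`). This gives a gap in each system. A side of one
contains one fixed point, which is not in a side of the other as its kind is the wrong one; so the
gaps interleave and their vertices are exactly the fixed points.

For uniqueness (`gap_subset`), in any such pair a side `(x, y)` in `𝓛₁` contains one fixed point
`z`. For another pair, `x` is a vertex of its first gap, since otherwise a side of its second gap would
cover `(x, z)` and start at `x`, against transversality. The side of its first gap covering `(x, z)`
then starts at `x` and contains a single fixed point, which forces it to end at `y`.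

Incidences between points and intervals are proved in a coordinate `pos p : S¹ → [0, 1)` based at a
suitable point `p`, in which the cyclic order is explicit (`sbtw_iff`).
-/

open Set Filter Topology

namespace Veering

/-- The circle `S¹`: the unit additive circle `ℝ / ℤ`, with its standard
circular order (`sbtw x y z` means the triple `(x,y,z)` is counterclockwise)
and its standard topology. -/
abbrev S1 : Type := UnitAddCircle

/-- A good open interval in `S¹`, recorded by its ordered pair of distinct
endpoints; its carrier is the set of points strictly counterclockwise
between them. -/
structure GoodInt : Type where
  a : S1
  b : S1
  ne : a ≠ b

namespace GoodInt

/-- The set of points of the good open interval `(a, b)`. -/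
def carrier (I : GoodInt) : Set S1 := {z : S1 | sbtw I.a z I.b}

/-- The dual good interval `(u,v)* = (v,u)`. -/
def dual (I : GoodInt) : GoodInt := ⟨I.b, I.a, I.ne.symm⟩

/-- The vertex set `v(ℓ(I)) = {a, b}` of the leaf determined by `I`. -/
def verts (I : GoodInt) : Set S1 := {I.a, I.b}

end GoodInt

/-- `I` and `J` represent the same leaf `ℓ(I) = {I, I*}`. -/
def SameLeaf (I J : GoodInt) : Prop := J = I ∨ J = I.dual

/-- A lamination system: a nonempty collection of good open intervals, closed
under duals, pairwise unlinked, and closed under unions of ascending chains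
(when these unions are good intervals). -/
structure LamSys : Type where
  mem : Set GoodInt
  nonempty : mem.Nonempty
  dual_mem : ∀ I ∈ mem, GoodInt.dual I ∈ mem
  unlinked : ∀ I ∈ mem, ∀ J ∈ mem,
      I.carrier ⊆ J.carrier ∨ I.dual.carrier ⊆ J.carrier ∨
      I.carrier ⊆ J.dual.carrier ∨ I.dual.carrier ⊆ J.dual.carrier
  chain_closed : ∀ c : ℕ → GoodInt, (∀ n, c n ∈ mem) →
      (∀ n, (c n).carrier ⊆ (c (n + 1)).carrier) →
      ∀ J : GoodInt, J.carrier = ⋃ n, (c n).carrier → J ∈ mem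

namespace LamSys

/-- The endpoint set `E(𝓛)`: the union of the vertex sets of all leaves. -/
def E (L : LamSys) : Set S1 := ⋃ I ∈ L.mem, I.verts

/-- A gap of `L`: a set of pairwise disjoint elements of `L` such that every
leaf of `L` lies on one of them. -/
def IsGap (L : LamSys) (G : Set GoodInt) : Prop :=
  G ⊆ L.mem ∧
  (∀ I ∈ G, ∀ J ∈ G, I ≠ J → Disjoint I.carrier J.carrier) ∧
  (∀ I ∈ L.mem, ∃ J ∈ G, I.carrier ⊆ J.carrier ∨ I.dual.carrier ⊆ J.carrier)

end LamSys

/-- The vertex set `v(𝒢) = S¹ \ ⋃ 𝒢` of a gap. -/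
def gapVerts (G : Set GoodInt) : Set S1 := (⋃ I ∈ G, I.carrier)ᶜ

/-- `t` is a tip of `G`: an isolated point of the vertex set of `G`. -/
def IsTipOf (t : S1) (G : Set GoodInt) : Prop :=
  t ∈ gapVerts G ∧ t ∉ closure (gapVerts G \ {t})

/-- A gap that is itself a leaf `{I, I*}`. -/
def IsLeafGap (G : Set GoodInt) : Prop := ∃ I : GoodInt, G = {I, I.dual}

/-- `G` is a crown with tip sequence `t : ℤ → S¹` and pivot `p`. -/
def IsCrownWith (G : Set GoodInt) (t : ℤ → S1) (p : S1) : Prop :=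
  (∀ k, p ≠ t k) ∧ (∀ k, t k ≠ t (k + 1)) ∧
  G = {I : GoodInt | ∃ k : ℤ, I.a = t k ∧ I.b = t (k + 1)} ∧
  gapVerts G = Set.range t ∪ {p}

/-- `G` is a crown. -/
def IsCrown (G : Set GoodInt) : Prop := ∃ t p, IsCrownWith G t p

/-- `p` is the pivot of the crown `G`. -/
def IsPivotOf (p : S1) (G : Set GoodInt) : Prop := ∃ t, IsCrownWith G t p

/-- A lamination system is quite full if every gap is an ideal polygon
(finitely many vertices) or a crown. -/
def LamSys.QuiteFull (L : LamSys) : Prop :=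
  ∀ G : Set GoodInt, L.IsGap G → (gapVerts G).Finite ∨ IsCrown G

/-- `p` is a rainbow point of `L`: there is a strictly descending sequence of
elements of `L` whose intersection is `{p}`. -/
def LamSys.IsRainbowPt (L : LamSys) (p : S1) : Prop :=
  ∃ I : ℕ → GoodInt, (∀ n, I n ∈ L.mem) ∧
    (∀ n, (I (n + 1)).carrier ⊂ (I n).carrier) ∧ (⋂ n, (I n).carrier) = {p}

/-- `L` is loose: distinct non-leaf gaps have disjoint vertex sets. -/
def LamSys.Loose (L : LamSys) : Prop :=
  ∀ G H : Set GoodInt, L.IsGap G → L.IsGap H → ¬ IsLeafGap G → ¬ IsLeafGap H →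
    G ≠ H → Disjoint (gapVerts G) (gapVerts H)

/-- The sequence of leaves represented by `c` converges to the good
interval `J`. -/
def SeqConv (c : ℕ → GoodInt) (J : GoodInt) : Prop :=
  ∃ d : ℕ → GoodInt, (∀ n, SameLeaf (c n) (d n)) ∧
    J.carrier ⊆ Filter.liminf (fun n => (d n).carrier) Filter.atTop ∧
    Filter.limsup (fun n => (d n).carrier) Filter.atTop ⊆ closure J.carrier

/-- `I ∈ L` admits an `I`-side sequence: a sequence of leaves of `L`, each
distinct from `ℓ(I)` and lying on `I`, converging to `I`.  (`I` is isolated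
precisely when this fails.) -/
def LamSys.HasSideSeq (L : LamSys) (I : GoodInt) : Prop :=
  ∃ c : ℕ → GoodInt, (∀ n, c n ∈ L.mem) ∧ (∀ n, ¬ SameLeaf I (c n)) ∧
    (∀ n, (c n).carrier ⊆ I.carrier ∨ (c n).dual.carrier ⊆ I.carrier) ∧
    SeqConv c I

/-- `L` is totally disconnected: every distinct pair is separated by a
non-leaf gap. -/
def LamSys.TotDisc (L : LamSys) : Prop :=
  ∀ I ∈ L.mem, ∀ J ∈ L.mem, I.carrier ⊂ J.dual.carrier →
    ∃ G : Set GoodInt, L.IsGap G ∧ ¬ IsLeafGap G ∧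
      ∃ M ∈ G, ∃ N ∈ G, I.carrier ⊆ M.carrier ∧ J.carrier ⊆ N.carrier

/-- Gaps `G1` and `G2` interleave: every element of each contains exactly one
vertex of the other. -/
def Interleave (G1 G2 : Set GoodInt) : Prop :=
  (∀ I ∈ G1, ∃! x : S1, x ∈ I.carrier ∩ gapVerts G2) ∧
  (∀ I ∈ G2, ∃! x : S1, x ∈ I.carrier ∩ gapVerts G1)

/-- A pseudo-fibered pair: two quite full, loose, strongly transverse
lamination systems. -/
structure PseudoFibered (L1 L2 : LamSys) : Prop where
  qf1 : L1.QuiteFull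
  qf2 : L2.QuiteFull
  loose1 : L1.Loose
  loose2 : L2.Loose
  transverse : L1.E ∩ L2.E = ∅

/-- A veering pair: a pseudo-fibered pair in which every non-leaf gap of one
system admits an interleaving gap in the other. -/
structure VeeringPair (L1 L2 : LamSys) extends PseudoFibered L1 L2 : Prop where
  inter1 : ∀ G : Set GoodInt, L1.IsGap G → ¬ IsLeafGap G →
    ∃ H : Set GoodInt, L2.IsGap H ∧ Interleave G H
  inter2 : ∀ G : Set GoodInt, L2.IsGap G → ¬ IsLeafGap G →
    ∃ H : Set GoodInt, L1.IsGap H ∧ Interleave G H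

/-- An orientation-preserving homeomorphism of the circle: a bijection of
`S¹` which together with its inverse is continuous, and which preserves the
counterclockwise circular order. -/
def PosHomeo (g : Equiv.Perm S1) : Prop :=
  Continuous ⇑g ∧ Continuous ⇑g.symm ∧
  ∀ x y z : S1, sbtw x y z → sbtw (g x) (g y) (g z)

/-- `g ∈ Aut(𝓛)`: an orientation-preserving homeomorphism of `S¹` mapping each
element of `𝓛` to an element of `𝓛`. -/
def LamSys.InAut (L : LamSys) (g : Equiv.Perm S1) : Prop :=
  PosHomeo g ∧ ∀ I ∈ L.mem, ∃ J ∈ L.mem, J.carrier = ⇑g '' I.carrier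

/-- `g` maps the gap `G` onto itself. -/
def MapsGapOnto (g : Equiv.Perm S1) (G : Set GoodInt) : Prop :=
  (∀ I ∈ G, ∃ J ∈ G, J.carrier = ⇑g '' I.carrier) ∧
  (∀ J ∈ G, ∃ I ∈ G, J.carrier = ⇑g '' I.carrier)

/-- The fixed point set of `g` on `S¹`. -/
def FixSet (g : Equiv.Perm S1) : Set S1 := {x : S1 | g x = x}

/-- The set of periodic points of `g` on `S¹`. -/
def PerSet (g : Equiv.Perm S1) : Set S1 := {x : S1 | ∃ n : ℕ, 0 < n ∧ (g ^ n) x = x}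

/-- `p` is an attracting fixed point of `g`. -/
def IsAttractingFix (g : Equiv.Perm S1) (p : S1) : Prop :=
  g p = p ∧ ∃ I : GoodInt, I.carrier ∩ FixSet g = {p} ∧
    ⇑g '' closure I.carrier ⊆ I.carrier

/-- `p` is a repelling fixed point of `g`. -/
def IsRepellingFix (g : Equiv.Perm S1) (p : S1) : Prop :=
  g p = p ∧ ∃ I : GoodInt, I.carrier ∩ FixSet g = {p} ∧
    I.carrier ⊆ ⇑g '' closure I.carrier

/-- `g` is elliptic: nontrivial of finite order. -/
def Elliptic (g : Equiv.Perm S1) : Prop := g ≠ 1 ∧ IsOfFinOrder g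

/-- `g` is parabolic: it has exactly one fixed point. -/
def Parabolic (g : Equiv.Perm S1) : Prop := ∃! x : S1, g x = x

/-- `g` is hyperbolic: exactly two fixed points, one attracting and one
repelling. -/
def Hyperbolic (g : Equiv.Perm S1) : Prop :=
  ∃ a b : S1, a ≠ b ∧ FixSet g = {a, b} ∧ IsAttractingFix g a ∧ IsRepellingFix g b

/-- `g` is pseudo-Anosov-like for the pair `(L1, L2)`: nontrivial, neither
elliptic nor parabolic, and preserving both gaps of some interleaving pair. -/
def PAlike (L1 L2 : LamSys) (g : Equiv.Perm S1) : Prop :=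
  g ≠ 1 ∧ ¬ Elliptic g ∧ ¬ Parabolic g ∧
  ∃ G1 G2 : Set GoodInt, L1.IsGap G1 ∧ L2.IsGap G2 ∧ Interleave G1 G2 ∧
    MapsGapOnto g G1 ∧ MapsGapOnto g G2

/-- `g` is properly pseudo-Anosov: pA-like with nonempty fixed point set. -/
def ProperlyPA (L1 L2 : LamSys) (g : Equiv.Perm S1) : Prop :=
  PAlike L1 L2 g ∧ (FixSet g).Nonempty

/-- Two leaves are linked: each of the two complementary components of the
vertex set of one contains a vertex of the other. -/
def LeavesLinked (I J : GoodInt) : Prop :=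
  (I.carrier ∩ J.verts).Nonempty ∧ (I.dual.carrier ∩ J.verts).Nonempty

/-- Two gaps are linked: they contain a linked pair of boundary leaves. -/
def GapsLinked (G1 G2 : Set GoodInt) : Prop :=
  ∃ I1 ∈ G1, ∃ I2 ∈ G2, LeavesLinked I1 I2

/-- Gaps `G1`, `G2` cross: there are distinct pairs `{I₁, J₁} ⊆ G1`,
`{I₂, J₂} ⊆ G2` such that for each `i`, the vertex set of the other gap is
contained in `Iᵢ ∪ Jᵢ` and meets `Iᵢ` in exactly one point. -/
def GapsCross (G1 G2 : Set GoodInt) : Prop :=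
  ∃ I1 ∈ G1, ∃ J1 ∈ G1, ∃ I2 ∈ G2, ∃ J2 ∈ G2,
    I1.carrier ⊂ J1.dual.carrier ∧ I2.carrier ⊂ J2.dual.carrier ∧
    gapVerts G2 ⊆ I1.carrier ∪ J1.carrier ∧
    (∃! x : S1, x ∈ I1.carrier ∩ gapVerts G2) ∧
    gapVerts G1 ⊆ I2.carrier ∪ J2.carrier ∧
    (∃! x : S1, x ∈ I2.carrier ∩ gapVerts G1)

/-- The Baumslag–Solitar group `BS(m,n) = ⟨a, b | b aᵐ b⁻¹ = aⁿ⟩`,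
with `a = FreeGroup.of false` and `b = FreeGroup.of true`. -/
abbrev BSGroup (m n : ℤ) : Type :=
  PresentedGroup
    ({FreeGroup.of true * FreeGroup.of false ^ m * (FreeGroup.of true)⁻¹ *
        (FreeGroup.of false ^ n)⁻¹} : Set (FreeGroup Bool))

/-! ### Coordinates on the circle and good intervals -/

/-- The coordinate of `x` based at `p`: the representative in `[0,1)` of `x - p`. -/
noncomputable def pos (p x : S1) : ℝ := (AddCircle.equivIco 1 0 (x - p) : ℝ)

/-- The point whose coordinate based at `p` is `t` (for `t ∈ [0,1)`). -/
noncomputable def pt (p : S1) (t : ℝ) : S1 := p + (t : S1)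

/-- The cyclic order on coordinates in `[0,1)`. -/
def Cyc (x y z : ℝ) : Prop := (x < y ∧ y < z) ∨ (y < z ∧ z < x) ∨ (z < x ∧ x < y)

theorem pos_nonneg (p x : S1) : 0 ≤ pos p x := (AddCircle.equivIco 1 0 (x - p)).2.1

theorem pos_lt_one (p x : S1) : pos p x < 1 := by
  have := (AddCircle.equivIco (1 : ℝ) 0 (x - p)).2.2
  simpa [pos] using this

theorem pt_pos (p x : S1) : pt p (pos p x) = x := by
  unfold pt pos
  rw [AddCircle.coe_equivIco]
  abel

theorem pos_pt (p : S1) {t : ℝ} (h0 : 0 ≤ t) (h1 : t < 1) : pos p (pt p t) = t := by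
  unfold pt pos
  rw [add_sub_cancel_left, AddCircle.equivIco_coe_of_mem]
  exact ⟨h0, by simpa using h1⟩

theorem pos_inj {p x y : S1} : pos p x = pos p y ↔ x = y :=
  ⟨fun h => by rw [← pt_pos p x, h, pt_pos], fun h => by rw [h]⟩

theorem pos_self (p : S1) : pos p p = 0 := by
  have h : pt p 0 = p := by simp [pt]
  have := pos_pt p le_rfl one_pos
  rwa [h] at this

theorem pos_eq_zero {p x : S1} : pos p x = 0 ↔ x = p := by
  rw [← pos_self p, pos_inj]

/-- The cyclic order of the circle in coordinates. Together with `mem_carrier` it turns every statement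
about finitely many points and intervals into a statement about the order of finitely many reals,
whatever the base point `p`; `p` is best chosen among the points involved, with coordinate `0`. -/
theorem sbtw_iff (p x y z : S1) : sbtw x y z ↔ Cyc (pos p x) (pos p y) (pos p z) := by
  obtain ⟨r, rfl⟩ := QuotientAddGroup.mk_surjective p
  have key : ∀ {s t : ℝ}, 0 ≤ s → s < 1 → 0 ≤ t → t < 1 →
      toIcoMod (one_pos : (0:ℝ) < 1) (r + s) (r + t) = if s ≤ t then r + t else r + t + 1 := by
    intro s t hs hs1 ht ht1
    rw [toIcoMod_eq_iff]
    split_ifs with h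
    · exact ⟨⟨by linarith, by linarith⟩, 0, by simp⟩
    · exact ⟨⟨by linarith, by linarith⟩, -1, by simp⟩
  have key' : ∀ {s t : ℝ}, 0 ≤ s → s < 1 → 0 ≤ t → t < 1 →
      toIocMod (one_pos : (0:ℝ) < 1) (r + s) (r + t) = if s < t then r + t else r + t + 1 := by
    intro s t hs hs1 ht ht1
    rw [toIocMod_eq_iff]
    split_ifs with h
    · exact ⟨⟨by linarith, by linarith⟩, 0, by simp⟩
    · exact ⟨⟨by linarith, by linarith⟩, -1, by simp⟩
  have rep : ∀ x : S1, x = ((r + pos (r : S1) x : ℝ) : S1) := by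
    intro x
    conv_lhs => rw [← pt_pos (r : S1) x]
    simp [pt]
  have hx := pos_nonneg (r : S1) x
  have hx1 := pos_lt_one (r : S1) x
  have hy := pos_nonneg (r : S1) y
  have hy1 := pos_lt_one (r : S1) y
  have hz := pos_nonneg (r : S1) z
  have hz1 := pos_lt_one (r : S1) z
  rw [sbtw_iff_not_btw]
  have e : btw z y x ↔ btw ((r + pos (r : S1) z : ℝ) : S1) ((r + pos (r : S1) y : ℝ) : S1)
      ((r + pos (r : S1) x : ℝ) : S1) := by rw [← rep, ← rep, ← rep]
  rw [e]
  have e2 := QuotientAddGroup.btw_coe_iff (p := (1:ℝ)) (x₁ := r + pos (r : S1) z)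
    (x₂ := r + pos (r : S1) y) (x₃ := r + pos (r : S1) x)
  have e3 : btw ((r + pos (r : S1) z : ℝ) : S1) ((r + pos (r : S1) y : ℝ) : S1)
      ((r + pos (r : S1) x : ℝ) : S1) ↔ _ := e2
  rw [e3, key hz hz1 hy hy1, key' hz hz1 hx hx1]
  change _ ↔ Cyc (pos (r : S1) x) (pos (r : S1) y) (pos (r : S1) z)
  generalize pos (r : S1) x = a at *
  generalize pos (r : S1) y = b at *
  generalize pos (r : S1) z = c at *
  unfold Cyc
  split_ifs <;> constructor <;> grind

theorem mem_carrier (p : S1) {I : GoodInt} {z : S1} :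
    z ∈ I.carrier ↔ Cyc (pos p I.a) (pos p z) (pos p I.b) := sbtw_iff p _ _ _

@[simp] theorem dual_a (I : GoodInt) : I.dual.a = I.b := rfl
@[simp] theorem dual_b (I : GoodInt) : I.dual.b = I.a := rfl
@[simp] theorem dual_dual (I : GoodInt) : I.dual.dual = I := rfl

theorem mem_dual (p : S1) {I : GoodInt} {z : S1} :
    z ∈ I.dual.carrier ↔ Cyc (pos p I.b) (pos p z) (pos p I.a) := sbtw_iff p _ _ _

theorem GoodInt.ext' {I J : GoodInt} (h1 : I.a = J.a) (h2 : I.b = J.b) : I = J := by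
  cases I; cases J; simp_all

theorem mem_carrier_mk (p : S1) {a b : S1} {h : a ≠ b} {z : S1} :
    z ∈ (⟨a, b, h⟩ : GoodInt).carrier ↔ Cyc (pos p a) (pos p z) (pos p b) := sbtw_iff p _ _ _

theorem a_not_mem (I : GoodInt) : I.a ∉ I.carrier := by
  rw [mem_carrier I.a]; unfold Cyc; grind

theorem b_not_mem (I : GoodInt) : I.b ∉ I.carrier := by
  rw [mem_carrier I.a]; unfold Cyc; grind

/-- Every point lies in `I`, in `I*`, or is an endpoint. -/
theorem tri (I : GoodInt) (z : S1) :
    z ∈ I.carrier ∨ z ∈ I.dual.carrier ∨ z = I.a ∨ z = I.b := by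
  rw [mem_carrier I.a, mem_dual I.a, ← pos_inj (p := I.a) (x := z), ← pos_inj (p := I.a) (x := z)]
  have := mt (pos_inj (p := I.a)).1 I.ne
  unfold Cyc
  grind

theorem not_dual_of_mem {I : GoodInt} {z : S1} (h : z ∈ I.carrier) : z ∉ I.dual.carrier := by
  rw [mem_carrier I.a] at h; rw [mem_dual I.a]; unfold Cyc at *; grind

theorem exists_pos_between (p : S1) {s t : ℝ} (hs : 0 ≤ s) (ht : t ≤ 1) (h : s < t) :
    ∃ z, s < pos p z ∧ pos p z < t :=
  ⟨pt p ((s + t) / 2), by rw [pos_pt] <;> linarith, by rw [pos_pt] <;> linarith⟩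

theorem carrier_nonempty (I : GoodInt) : ∃ z, z ∈ I.carrier := by
  have h : pos I.a I.b ≠ 0 := fun h => I.ne (pos_eq_zero.1 h).symm
  obtain ⟨z, h1, h2⟩ := exists_pos_between I.a le_rfl (pos_lt_one I.a I.b).le
    (lt_of_le_of_ne (pos_nonneg _ _) h.symm)
  refine ⟨z, (mem_carrier I.a).2 (Or.inl ⟨?_, h2⟩)⟩
  rwa [pos_self]

/-- An interval meeting `J` and containing neither endpoint of `J` lies in `J`. -/
theorem sub_of {I J : GoodInt} (ha : J.a ∉ I.carrier) (hb : J.b ∉ I.carrier) {z : S1}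
    (hz : z ∈ I.carrier) (hzJ : z ∈ J.carrier) : I.carrier ⊆ J.carrier := by
  intro w hw
  rw [mem_carrier I.a] at *
  rw [pos_self] at *
  have := pos_nonneg I.a J.a
  have := pos_nonneg I.a J.b
  have := pos_nonneg I.a z
  have := pos_nonneg I.a w
  have := pos_nonneg I.a I.b
  unfold Cyc at *
  grind

theorem a_not_mem_of_sub {I J : GoodInt} (h : I.carrier ⊆ J.carrier) : J.a ∉ I.carrier :=
  fun h' => a_not_mem J (h h')

theorem b_not_mem_of_sub {I J : GoodInt} (h : I.carrier ⊆ J.carrier) : J.b ∉ I.carrier :=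
  fun h' => b_not_mem J (h h')

/-- The endpoints of a subinterval of `J` do not lie in `J*`. -/
theorem ends_of_sub {I J : GoodInt} (h : I.carrier ⊆ J.carrier) :
    I.a ∉ J.dual.carrier ∧ I.b ∉ J.dual.carrier := by
  have key : ∀ I J : GoodInt, ∀ z, z ∈ I.carrier → z ∈ J.carrier →
      (I.a ∈ J.dual.carrier ∨ I.b ∈ J.dual.carrier) → J.a ∈ I.carrier ∨ J.b ∈ I.carrier := by
    intro I J z hz hzJ h
    simp only [mem_carrier I.a, dual_a, dual_b, pos_self] at *
    have := pos_nonneg I.a J.a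
    have := pos_nonneg I.a J.b
    have := pos_nonneg I.a z
    have := pos_nonneg I.a I.b
    unfold Cyc at *
    grind
  obtain ⟨z, hz⟩ := carrier_nonempty I
  constructor <;> intro h'
  · rcases key I J z hz (h hz) (Or.inl h') with h2 | h2
    · exact a_not_mem_of_sub h h2
    · exact b_not_mem_of_sub h h2
  · rcases key I J z hz (h hz) (Or.inr h') with h2 | h2
    · exact a_not_mem_of_sub h h2
    · exact b_not_mem_of_sub h h2

theorem carrier_inj {I J : GoodInt} (h : I.carrier = J.carrier) : I = J := by
  have key : ∀ I J : GoodInt, I.carrier ⊆ J.carrier → J.carrier ⊆ I.carrier →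
      I.a = J.a ∧ I.b = J.b := by
    intro I J h1 h2
    have e1 := ends_of_sub h1
    have e2 := ends_of_sub h2
    have t1 := tri J I.a
    have t2 := tri J I.b
    have n1 : I.a ∉ J.carrier := fun h => a_not_mem I (h2 h)
    have n2 : I.b ∉ J.carrier := fun h => b_not_mem I (h2 h)
    have hI := I.ne
    have hJ := J.ne
    by_cases hh : I.a = J.a
    · refine ⟨hh, ?_⟩
      grind
    · exfalso
      have q1 : I.a = J.b := by grind
      have q2 : I.b = J.a := by grind
      obtain ⟨z, hz⟩ := carrier_nonempty I
      have hz2 := h1 hz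
      rw [mem_carrier J.a, q1, q2] at hz
      rw [mem_carrier J.a] at hz2
      unfold Cyc at *
      grind
  obtain ⟨h1, h2⟩ := key I J h.le h.ge
  exact GoodInt.ext' h1 h2

/-- Passing to duals reverses inclusions. -/
theorem sub_dual_comm {I J : GoodInt} (h : I.dual.carrier ⊆ J.dual.carrier) :
    J.carrier ⊆ I.carrier := by
  intro z hz
  rcases tri I z with h1 | h1 | h1 | h1
  · exact h1
  · exact absurd (h h1) (not_dual_of_mem hz)
  · have := (ends_of_sub h).2; subst h1; exact absurd hz this
  · have := (ends_of_sub h).1; subst h1; exact absurd hz this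

theorem disj_of_sub_dual {I J : GoodInt} (h : I.carrier ⊆ J.dual.carrier) :
    Disjoint I.carrier J.carrier :=
  Set.disjoint_left.2 fun _ h1 h2 => not_dual_of_mem h2 (h h1)

/-- The two endpoints of a leaf are never separated by another leaf. -/
theorem LamSys.unl (L : LamSys) {K M : GoodInt} (hK : K ∈ L.mem) (hM : M ∈ L.mem)
    (ha : K.a ∈ M.carrier) : K.b ∉ M.dual.carrier := by
  have main : ∀ K M : GoodInt, K.a ∈ M.carrier → K.b ∈ M.dual.carrier →
      M.a ∈ K.dual.carrier ∧ M.b ∈ K.carrier := by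
    intro K M h1 h2
    simp only [mem_carrier M.a, dual_a, dual_b, pos_self] at *
    have := pos_nonneg M.a K.a
    have := pos_nonneg M.a K.b
    have := pos_nonneg M.a M.b
    unfold Cyc at *
    grind
  intro hb
  obtain ⟨h1, h2⟩ := main K M ha hb
  rcases L.unlinked K hK M hM with h | h | h | h
  · exact b_not_mem_of_sub h h2
  · exact a_not_mem_of_sub h h1
  · exact (a_not_mem_of_sub h) h2
  · exact (b_not_mem_of_sub h) h1

theorem LamSys.unl' (L : LamSys) {K M : GoodInt} (hK : K ∈ L.mem) (hM : M ∈ L.mem)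
    (ha : K.b ∈ M.carrier) : K.a ∉ M.dual.carrier :=
  L.unl (L.dual_mem K hK) hM (by simpa using ha)

/-! ### Unions of chains, maximal leaves and the gap determined by a set -/

open Classical in
/-- The coordinate based at `c` of the terminal endpoint of `I`, with value `1` instead of `0` when
that endpoint is `c`.  An interval that misses `c` is then a genuine real interval. -/
noncomputable def hi (c : S1) (I : GoodInt) : ℝ := if I.b = c then 1 else pos c I.b

theorem hi_le_one (c : S1) (I : GoodInt) : hi c I ≤ 1 := by
  unfold hi
  split_ifs
  · exact le_rfl
  · exact (pos_lt_one _ _).le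

theorem mem_iff_hi {c : S1} {I : GoodInt} (hc : c ∉ I.carrier) {z : S1} :
    z ∈ I.carrier ↔ pos c I.a < pos c z ∧ pos c z < hi c I := by
  simp only [mem_carrier c, pos_self] at *
  have := pos_nonneg c I.a
  have := pos_nonneg c I.b
  have := pos_nonneg c z
  have := pos_lt_one c I.a
  have := pos_lt_one c I.b
  have := pos_lt_one c z
  have e : I.b = c ↔ pos c I.b = 0 := pos_eq_zero.symm
  have := mt (pos_inj (p := c)).1 I.ne
  unfold hi Cyc at *
  split_ifs <;> grind

/-- Closedness for arbitrary chains, rather than ascending sequences, of elements of `L` missing a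
common point `c`. -/
theorem LamSys.closed_union (L : LamSys) {S : Set GoodInt} (hS : S ⊆ L.mem)
    (htot : ∀ I ∈ S, ∀ J ∈ S, I.carrier ⊆ J.carrier ∨ J.carrier ⊆ I.carrier)
    {c : S1} (hc : ∀ I ∈ S, c ∉ I.carrier) {J : GoodInt}
    (hJ : ∀ z, z ∈ J.carrier ↔ ∃ I ∈ S, z ∈ I.carrier) : J ∈ L.mem := by
  -- By the Lindelöf property a countable subfamily already has the same union.
  obtain ⟨T, hT, hTU⟩ := TopologicalSpace.isOpen_iUnion_countable
    (fun I : S => Ioo (pos c I.1.a) (hi c I.1)) (fun _ => isOpen_Ioo)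
  have hcov : ∀ z, z ∈ J.carrier → ∃ I ∈ T, z ∈ I.1.carrier := by
    intro z hz
    obtain ⟨I, hI, hzI⟩ := (hJ z).1 hz
    have : pos c z ∈ ⋃ I : S, Ioo (pos c I.1.a) (hi c I.1) :=
      mem_iUnion.2 ⟨⟨I, hI⟩, (mem_iff_hi (hc I hI)).1 hzI⟩
    rw [← hTU] at this
    obtain ⟨I', hI', h⟩ := mem_iUnion₂.1 this
    exact ⟨I', hI', (mem_iff_hi (hc _ I'.2)).2 h⟩
  have hTne : T.Nonempty := by
    obtain ⟨z, hz⟩ := carrier_nonempty J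
    obtain ⟨I, hI, _⟩ := hcov z hz
    exact ⟨I, hI⟩
  obtain ⟨f, rfl⟩ := hT.exists_eq_range hTne
  have hdir : Directed (fun A B : S => A.1.carrier ⊆ B.1.carrier) f := by
    intro m n
    rcases htot _ (f m).2 _ (f n).2 with h | h
    · exact ⟨n, h, subset_rfl⟩
    · exact ⟨m, subset_rfl, h⟩
  refine L.chain_closed (fun n => (f (hdir.sequence f n)).1) (fun n => hS (f _).2)
    (fun n => hdir.sequence_mono_nat n) J ?_
  ext z
  rw [mem_iUnion]
  constructor
  · intro hz
    obtain ⟨_, ⟨n, rfl⟩, h⟩ := hcov z hz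
    exact ⟨_, hdir.rel_sequence n h⟩
  · rintro ⟨n, hn⟩
    exact (hJ z).2 ⟨_, (f _).2, hn⟩

/-- `I` contains no point of `C`. -/
def Miss (C : Set S1) (I : GoodInt) : Prop := ∀ x ∈ C, x ∉ I.carrier

/-- If `C` has two points, then the elements of `L` that miss `C` and contain a given one form a
chain, so there is a largest one among them. -/
theorem LamSys.exists_max (L : LamSys) {C : Set S1} {c d : S1} (hc : c ∈ C) (hd : d ∈ C)
    (hcd : c ≠ d) {I₀ : GoodInt} (h₀ : I₀ ∈ L.mem) (hm : Miss C I₀) :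
    ∃ J ∈ L.mem, I₀.carrier ⊆ J.carrier ∧ Miss C J ∧
      ∀ K ∈ L.mem, J.carrier ⊆ K.carrier → Miss C K → K = J := by
  obtain ⟨z₀, hz₀⟩ := carrier_nonempty I₀
  set F : Set GoodInt := {J | J ∈ L.mem ∧ I₀.carrier ⊆ J.carrier ∧ Miss C J} with hF
  have hF0 : I₀ ∈ F := ⟨h₀, subset_rfl, hm⟩
  have htot : ∀ I ∈ F, ∀ J ∈ F, I.carrier ⊆ J.carrier ∨ J.carrier ⊆ I.carrier := by
    rintro I ⟨hI, hI0, hIC⟩ J ⟨hJ, hJ0, hJC⟩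
    rcases L.unlinked I hI J hJ with h | h | h | h
    · exact Or.inl h
    · -- Here `C` consists of the endpoints of `I`.
      right
      have t1 := tri I c
      have t2 := tri I d
      have n1 : c ∉ I.dual.carrier := fun h' => hJC c hc (h h')
      have n2 : d ∉ I.dual.carrier := fun h' => hJC d hd (h h')
      have n3 := hIC c hc
      have n4 := hIC d hd
      have e1 := hJC c hc
      have e2 := hJC d hd
      refine sub_of ?_ ?_ (hJ0 hz₀) (hI0 hz₀) <;> grind
    · exact absurd (h (hI0 hz₀)) (not_dual_of_mem (hJ0 hz₀))
    · exact Or.inr (sub_dual_comm h)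
  have hFc : ∀ I ∈ F, c ∉ I.carrier := fun I hI => hI.2.2 c hc
  have hz0F : ∀ I ∈ F, pos c I.a < pos c z₀ ∧ pos c z₀ < hi c I := fun I hI =>
    (mem_iff_hi (hFc I hI)).1 (hI.2.1 hz₀)
  set lo' := sInf ((fun I : GoodInt => pos c I.a) '' F) with hlo
  set hi' := sSup (hi c '' F) with hhi
  have bb : BddBelow ((fun I : GoodInt => pos c I.a) '' F) :=
    ⟨0, by rintro _ ⟨I, _, rfl⟩; exact pos_nonneg _ _⟩
  have ba : BddAbove (hi c '' F) := ⟨1, by rintro _ ⟨I, _, rfl⟩; exact hi_le_one _ _⟩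
  have lo_le : ∀ I ∈ F, lo' ≤ pos c I.a := fun I hI => csInf_le bb ⟨I, hI, rfl⟩
  have le_hi : ∀ I ∈ F, hi c I ≤ hi' := fun I hI => le_csSup ba ⟨I, hI, rfl⟩
  have lo0 : 0 ≤ lo' := le_csInf ⟨_, I₀, hF0, rfl⟩ (by rintro _ ⟨I, _, rfl⟩; exact pos_nonneg _ _)
  have hi1 : hi' ≤ 1 := csSup_le ⟨_, I₀, hF0, rfl⟩ (by rintro _ ⟨I, _, rfl⟩; exact hi_le_one _ _)
  have lz : lo' < pos c z₀ := lt_of_le_of_lt (lo_le I₀ hF0) (hz0F I₀ hF0).1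
  have zh : pos c z₀ < hi' := lt_of_lt_of_le (hz0F I₀ hF0).2 (le_hi I₀ hF0)
  have hδ0 : 0 < pos c d := lt_of_le_of_ne (pos_nonneg _ _) fun h => hcd (pos_eq_zero.1 h.symm).symm
  have hδ1 := pos_lt_one c d
  have hdF : ∀ I ∈ F, ¬ (pos c I.a < pos c d ∧ pos c d < hi c I) := fun I hI h =>
    hI.2.2 d hd ((mem_iff_hi (hFc I hI)).2 h)
  have hcase : 0 < lo' ∨ hi' < 1 := by
    rcases lt_or_ge (pos c z₀) (pos c d) with h | h
    · right
      refine lt_of_le_of_lt (csSup_le ⟨_, I₀, hF0, rfl⟩ ?_) hδ1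
      rintro _ ⟨I, hI, rfl⟩
      have := hdF I hI
      have := hz0F I hI
      grind
    · left
      refine lt_of_lt_of_le hδ0 (le_csInf ⟨_, I₀, hF0, rfl⟩ ?_)
      rintro _ ⟨I, hI, rfl⟩
      have := hdF I hI
      have := hz0F I hI
      grind
  have pa : pos c (pt c lo') = lo' := pos_pt c lo0 (by linarith [pos_lt_one c z₀])
  have pb : (hi' < 1 ∧ pos c (pt c hi') = hi') ∨ (hi' = 1 ∧ pt c hi' = c) := by
    rcases hi1.lt_or_eq with h | h
    · exact Or.inl ⟨h, pos_pt c (by linarith) h⟩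
    · right
      refine ⟨h, ?_⟩
      have h1 : ((1 : ℝ) : S1) = 0 := AddCircle.coe_period 1
      rw [h, pt, h1, add_zero]
  have hne : pt c lo' ≠ pt c hi' := by
    intro h
    rw [← pos_inj (p := c), pa] at h
    rcases pb with ⟨_, h2⟩ | ⟨h1, h2⟩
    · rw [h2] at h; linarith
    · rw [h2, pos_self] at h; grind
  set J : GoodInt := ⟨pt c lo', pt c hi', hne⟩ with hJdef
  have hiJ : hi c J = hi' := by
    unfold hi
    rcases pb with ⟨h1, h2⟩ | ⟨h1, h2⟩
    · rw [if_neg, hJdef, h2]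
      intro h
      rw [show J.b = pt c hi' from rfl] at h
      rw [h, pos_self] at h2; linarith
    · rw [if_pos h2, h1]
  have hcJ : c ∉ J.carrier := by
    rw [mem_carrier c, pos_self, show J.a = pt c lo' from rfl, show J.b = pt c hi' from rfl, pa]
    rcases pb with ⟨h1, h2⟩ | ⟨h1, h2⟩
    · rw [h2]; unfold Cyc; grind
    · rw [h2, pos_self]; unfold Cyc; grind
  have hJU : ∀ z, z ∈ J.carrier ↔ ∃ I ∈ F, z ∈ I.carrier := by
    intro z
    rw [mem_iff_hi hcJ, hiJ, show J.a = pt c lo' from rfl, pa]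
    constructor
    · rintro ⟨h1, h2⟩
      obtain ⟨_, ⟨I, hI, rfl⟩, hI'⟩ := exists_lt_of_csInf_lt (Set.Nonempty.image _ ⟨I₀, hF0⟩) h1
      obtain ⟨_, ⟨I2, hI2, rfl⟩, hI2'⟩ := exists_lt_of_lt_csSup (Set.Nonempty.image _ ⟨I₀, hF0⟩) h2
      have m1 := hz0F I hI
      have m2 := hz0F I2 hI2
      rcases lt_trichotomy (pos c z) (pos c z₀) with h | h | h
      · exact ⟨I, hI, (mem_iff_hi (hFc I hI)).2 ⟨hI', h.trans m1.2⟩⟩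
      · exact ⟨I, hI, (mem_iff_hi (hFc I hI)).2 ⟨hI', h ▸ m1.2⟩⟩
      · exact ⟨I2, hI2, (mem_iff_hi (hFc I2 hI2)).2 ⟨m2.1.trans h, hI2'⟩⟩
    · rintro ⟨I, hI, hz⟩
      have := (mem_iff_hi (hFc I hI)).1 hz
      exact ⟨(lo_le I hI).trans_lt this.1, this.2.trans_le (le_hi I hI)⟩
  have hJL : J ∈ L.mem := L.closed_union (fun I hI => hI.1) htot hFc hJU
  have h0J : I₀.carrier ⊆ J.carrier := fun z hz => (hJU z).2 ⟨I₀, hF0, hz⟩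
  refine ⟨J, hJL, h0J, ?_, ?_⟩
  · intro x hx hxJ
    obtain ⟨I, hI, hxI⟩ := (hJU x).1 hxJ
    exact hI.2.2 x hx hxI
  · intro K hK hJK hKC
    refine carrier_inj (Subset.antisymm (fun z hz => ?_) hJK)
    exact (hJU z).2 ⟨K, ⟨hK, h0J.trans hJK, hKC⟩, hz⟩

/-- The maximal elements of `L` among those that miss `C`. -/
def LamSys.maxGap (L : LamSys) (C : Set S1) : Set GoodInt :=
  {I | I ∈ L.mem ∧ Miss C I ∧ ∀ K ∈ L.mem, I.carrier ⊆ K.carrier → Miss C K → K = I}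

theorem LamSys.exists_mem_maxGap (L : LamSys) {C : Set S1} {c d : S1} (hc : c ∈ C) (hd : d ∈ C)
    (hcd : c ≠ d) {I : GoodInt} (hI : I ∈ L.mem) (hm : Miss C I) :
    ∃ J ∈ L.maxGap C, I.carrier ⊆ J.carrier := by
  obtain ⟨J, h1, h2, h3, h4⟩ := L.exists_max hc hd hcd hI hm
  exact ⟨J, ⟨h1, h3, h4⟩, h2⟩

/-- If no leaf separates two points of `C`, then `C` determines a gap of which it is part of the
vertex set. -/
theorem LamSys.maxGap_isGap (L : LamSys) {C : Set S1} {c d : S1} (hc : c ∈ C) (hd : d ∈ C)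
    (hcd : c ≠ d) (hor : ∀ I ∈ L.mem, Miss C I ∨ Miss C I.dual) : L.IsGap (L.maxGap C) := by
  refine ⟨fun I hI => hI.1, ?_, ?_⟩
  · rintro I ⟨hI, hIC, hImax⟩ J ⟨hJ, hJC, hJmax⟩ hne
    rcases L.unlinked I hI J hJ with h | h | h | h
    · exact absurd (hImax J hJ h hJC).symm hne
    · have t1 := tri I c
      have t2 := tri I d
      have n1 : c ∉ I.dual.carrier := fun h' => hJC c hc (h h')
      have n2 : d ∉ I.dual.carrier := fun h' => hJC d hd (h h')
      have n3 := hIC c hc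
      have n4 := hIC d hd
      have e1 := hJC c hc
      have e2 := hJC d hd
      obtain ⟨z, hz⟩ := carrier_nonempty I.dual
      refine (disj_of_sub_dual (sub_of (J := I.dual) ?_ ?_ (h hz) hz)).symm <;>
        simp only [dual_a, dual_b] <;> grind
    · exact disj_of_sub_dual h
    · exact absurd (hJmax I hI (sub_dual_comm h) hIC) hne
  · intro I hI
    rcases hor I hI with h | h
    · obtain ⟨J, hJ, h'⟩ := L.exists_mem_maxGap hc hd hcd hI h
      exact ⟨J, hJ, Or.inl h'⟩
    · obtain ⟨J, hJ, h'⟩ := L.exists_mem_maxGap hc hd hcd (L.dual_mem I hI) h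
      exact ⟨J, hJ, Or.inr h'⟩

theorem LamSys.sub_gapVerts (L : LamSys) (C : Set S1) : C ⊆ gapVerts (L.maxGap C) := by
  intro x hx h
  obtain ⟨I, hI, hxI⟩ := mem_iUnion₂.1 h
  exact hI.2.1 x hx hxI

/-! ### The structure of gaps -/

/-- An interval whose initial endpoint lies in the open interval `J` meets `J`. -/
theorem overlap_a {I J : GoodInt} (h : I.a ∈ J.carrier) : ∃ z, z ∈ I.carrier ∧ z ∈ J.carrier := by
  rw [mem_carrier I.a, pos_self] at h
  have hI := mt (pos_inj (p := I.a)).1 I.ne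
  rw [pos_self] at hI
  have := pos_nonneg I.a J.b
  have := pos_nonneg I.a J.a
  have := pos_nonneg I.a I.b
  have := pos_lt_one I.a J.b
  have := pos_lt_one I.a I.b
  obtain ⟨z, h1, h2⟩ := exists_pos_between I.a le_rfl (t := min (pos I.a I.b) (pos I.a J.b))
    (by grind) (by unfold Cyc at h; grind)
  refine ⟨z, ?_⟩
  simp only [mem_carrier I.a, pos_self]
  unfold Cyc at *
  grind

theorem overlap_b {I J : GoodInt} (h : I.b ∈ J.carrier) : ∃ z, z ∈ I.carrier ∧ z ∈ J.carrier := by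
  by_cases ha : I.a ∈ J.carrier
  · exact overlap_a ha
  · rw [mem_carrier I.a] at ha h
    rw [pos_self] at ha
    have hI := mt (pos_inj (p := I.a)).1 I.ne
    rw [pos_self] at hI
    have := pos_nonneg I.a J.b
    have := pos_nonneg I.a J.a
    have := pos_nonneg I.a I.b
    have := pos_lt_one I.a J.b
    have := pos_lt_one I.a I.b
    obtain ⟨z, h1, h2⟩ := exists_pos_between I.a (pos_nonneg I.a J.a) (t := pos I.a I.b)
      (by grind) (by unfold Cyc at *; grind)
    refine ⟨z, ?_⟩
    simp only [mem_carrier I.a, pos_self]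
    unfold Cyc at *
    grind

theorem mem_gapVerts {G : Set GoodInt} {z : S1} : z ∈ gapVerts G ↔ ∀ I ∈ G, z ∉ I.carrier := by
  simp [gapVerts]

theorem not_mem_gapVerts {G : Set GoodInt} {z : S1} :
    z ∉ gapVerts G ↔ ∃ I ∈ G, z ∈ I.carrier := by
  simp [gapVerts]

section gap

variable {L : LamSys} {G : Set GoodInt}

theorem LamSys.IsGap.eq_of_mem (hG : L.IsGap G) {I J : GoodInt} (hI : I ∈ G) (hJ : J ∈ G) {z : S1}
    (h1 : z ∈ I.carrier) (h2 : z ∈ J.carrier) : I = J := by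
  by_contra h
  exact Set.disjoint_left.1 (hG.2.1 I hI J hJ h) h1 h2

theorem LamSys.IsGap.a_mem (hG : L.IsGap G) {I : GoodInt} (hI : I ∈ G) : I.a ∈ gapVerts G := by
  rw [mem_gapVerts]
  intro J hJ h
  obtain ⟨z, h1, h2⟩ := overlap_a h
  rw [hG.eq_of_mem hI hJ h1 h2] at h
  exact a_not_mem J h

theorem LamSys.IsGap.b_mem (hG : L.IsGap G) {I : GoodInt} (hI : I ∈ G) : I.b ∈ gapVerts G := by
  rw [mem_gapVerts]
  intro J hJ h
  obtain ⟨z, h1, h2⟩ := overlap_b h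
  rw [hG.eq_of_mem hI hJ h1 h2] at h
  exact b_not_mem J h

theorem LamSys.IsGap.eq_of_a (hG : L.IsGap G) {I J : GoodInt} (hI : I ∈ G) (hJ : J ∈ G)
    (h : I.a = J.a) : I = J := by
  have hI' := mt (pos_inj (p := I.a)).1 I.ne
  have hJ' := mt (pos_inj (p := I.a)).1 J.ne
  rw [← h, pos_self] at hJ'
  rw [pos_self] at hI'
  have := pos_nonneg I.a I.b
  have := pos_nonneg I.a J.b
  have := pos_lt_one I.a I.b
  obtain ⟨z, h1, h2⟩ := exists_pos_between I.a le_rfl (t := min (pos I.a I.b) (pos I.a J.b))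
    (by grind) (by grind)
  refine hG.eq_of_mem hI hJ (z := z) ?_ ?_
  · rw [mem_carrier I.a, pos_self]; unfold Cyc; grind
  · rw [mem_carrier I.a, ← h, pos_self]; unfold Cyc; grind

/-- A gap containing an interval and its dual is a leaf. -/
theorem LamSys.IsGap.eq_leaf (hG : L.IsGap G) {I : GoodInt} (hI : I ∈ G) (hI' : I.dual ∈ G) :
    G = {I, I.dual} := by
  ext J
  constructor
  · intro hJ
    obtain ⟨z, hz⟩ := carrier_nonempty J
    rcases tri I z with h | h | h | h
    · exact Or.inl (hG.eq_of_mem hJ hI hz h)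
    · exact Or.inr (hG.eq_of_mem hJ hI' hz h)
    · subst h; exact absurd hz (mem_gapVerts.1 (hG.a_mem hI) J hJ)
    · subst h; exact absurd hz (mem_gapVerts.1 (hG.b_mem hI) J hJ)
  · rintro (rfl | rfl)
    · exact hI
    · exact hI'

/-- The vertex set of an ideal polygon or a crown is countable, hence contains no interval. -/
theorem no_interior (hn : (gapVerts G).Finite ∨ IsCrown G) (I : GoodInt) :
    ∃ z ∈ I.carrier, ∃ J ∈ G, z ∈ J.carrier := by
  by_contra! hcon
  have hsub : I.carrier ⊆ gapVerts G := fun z hz => mem_gapVerts.2 (hcon z hz)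
  have hct : (gapVerts G).Countable := by
    rcases hn with h | ⟨t, p, -, -, -, h⟩
    · exact h.countable
    · rw [h]; exact (countable_range t).union (countable_singleton p)
  have hI := mt (pos_inj (p := I.a)).1 I.ne
  rw [pos_self] at hI
  have h0 := pos_nonneg I.a I.b
  have hlt : 0 < pos I.a I.b := lt_of_le_of_ne h0 hI
  have h1 : Ioo 0 (pos I.a I.b) ⊆ pos I.a '' I.carrier := by
    rintro t ⟨ht0, ht1⟩
    have e := pos_pt I.a ht0.le (ht1.trans (pos_lt_one _ _))
    refine ⟨pt I.a t, ?_, e⟩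
    rw [mem_carrier I.a, e, pos_self]
    exact Or.inl ⟨ht0, ht1⟩
  have h2 : (Ioo 0 (pos I.a I.b)).Countable := ((hct.mono hsub).image _).mono h1
  have h3 := h2.measure_zero MeasureTheory.volume
  rw [Real.volume_Ioo] at h3
  simp only [sub_zero, ENNReal.ofReal_eq_zero] at h3
  linarith

/-- Every vertex of an ideal polygon is the initial endpoint of one side and the terminal endpoint of
another. -/
theorem LamSys.IsGap.tip_of_finite (hG : L.IsGap G) (hf : (gapVerts G).Finite) {v : S1}
    (hv : v ∈ gapVerts G) : (∃ J ∈ G, J.a = v) ∧ ∃ J ∈ G, J.b = v := by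
  -- `m` and `M` are the extreme coordinates of the other vertices; just beyond them lie the gap
  -- elements adjacent to `v`.
  set W : Set ℝ := pos v '' gapVerts G with hW
  have hWf : W.Finite := hf.image _
  have key : ∀ s t : ℝ, 0 ≤ s → s < t → t ≤ 1 → (∀ w ∈ W, w ≤ s ∨ t ≤ w) →
      ∃ J ∈ G, pos v J.a ≤ s ∧ t ≤ hi v J ∧ v ∉ J.carrier := by
    intro s t hs hst ht hw
    obtain ⟨z, h1, h2⟩ := exists_pos_between v hs ht hst
    have hz : z ∉ gapVerts G := fun h => by
      have := hw _ ⟨z, h, rfl⟩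
      grind
    obtain ⟨J, hJ, hzJ⟩ := not_mem_gapVerts.1 hz
    have hvJ := mem_gapVerts.1 hv J hJ
    rw [mem_iff_hi hvJ] at hzJ
    refine ⟨J, hJ, ?_, ?_, hvJ⟩
    · have := hw _ ⟨J.a, hG.a_mem hJ, rfl⟩
      grind
    · have := hw _ ⟨J.b, hG.b_mem hJ, rfl⟩
      unfold hi at *
      split_ifs at * <;> grind
  constructor
  · have hWp : {w | w ∈ W ∧ 0 < w}.Finite := hWf.subset fun x hx => hx.1
    obtain ⟨m, hm, hmin⟩ := (hWp.union (finite_singleton (1 : ℝ))).exists_minimal ⟨1, Or.inr rfl⟩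
    have hm0 : 0 < m ∧ m ≤ 1 := by
      rcases hm with ⟨⟨x, hx, rfl⟩, h1⟩ | h
      · exact ⟨h1, (pos_lt_one _ _).le⟩
      · rw [mem_singleton_iff] at h; subst h; norm_num
    obtain ⟨J, hJ, h1, -, -⟩ := key 0 m le_rfl hm0.1 hm0.2 (by
      intro w hw
      by_contra! h
      have := hmin (Or.inl ⟨hw, h.1⟩) h.2.le
      linarith)
    exact ⟨J, hJ, pos_eq_zero.1 (le_antisymm h1 (pos_nonneg _ _))⟩
  · obtain ⟨m, hm, hmax⟩ := hWf.exists_maximal ⟨_, v, hv, rfl⟩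
    obtain ⟨x, hx, rfl⟩ := hm
    obtain ⟨J, hJ, -, h1, -⟩ := key (pos v x) 1 (pos_nonneg _ _) (pos_lt_one _ _) le_rfl (by
      intro w hw
      by_contra! h
      have := hmax hw h.1.le
      linarith)
    refine ⟨J, hJ, ?_⟩
    unfold hi at h1
    split_ifs at h1 with h
    · exact h
    · linarith [pos_lt_one v J.b]

/-- Every side of an ideal polygon or a crown has an adjacent side at each of its ends. -/
theorem LamSys.IsGap.next_prev (hG : L.IsGap G) (hn : (gapVerts G).Finite ∨ IsCrown G)
    {I : GoodInt} (hI : I ∈ G) : (∃ J ∈ G, J.a = I.b) ∧ ∃ J ∈ G, J.b = I.a := by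
  rcases hn with h | ⟨t, p, h1, h2, h3, h4⟩
  · exact ⟨(hG.tip_of_finite h (hG.b_mem hI)).1, (hG.tip_of_finite h (hG.a_mem hI)).2⟩
  · rw [h3] at hI
    obtain ⟨k, ka, kb⟩ := hI
    refine ⟨⟨⟨t (k + 1), t (k + 1 + 1), h2 _⟩, ?_, kb.symm⟩, ⟨⟨t (k - 1), t (k - 1 + 1), h2 _⟩, ?_, ?_⟩⟩
    · rw [h3]; exact ⟨k + 1, rfl, rfl⟩
    · rw [h3]; exact ⟨k - 1, rfl, rfl⟩
    · simp [ka]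

/-- Of two distinct vertices of a gap, at least one is not a pivot. -/
theorem LamSys.IsGap.tip_or_tip (hG : L.IsGap G) (hn : (gapVerts G).Finite ∨ IsCrown G)
    {x y : S1} (hx : x ∈ gapVerts G) (hy : y ∈ gapVerts G) (hxy : x ≠ y) :
    ((∃ J ∈ G, J.a = x) ∧ ∃ J ∈ G, J.b = x) ∨ ((∃ J ∈ G, J.a = y) ∧ ∃ J ∈ G, J.b = y) := by
  rcases hn with h | ⟨t, p, h1, h2, h3, h4⟩
  · exact Or.inl (hG.tip_of_finite h hx)
  · have key : ∀ k, (∃ J ∈ G, J.a = t k) ∧ ∃ J ∈ G, J.b = t k := by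
      intro k
      refine ⟨⟨⟨t k, t (k + 1), h2 k⟩, ?_, rfl⟩, ⟨⟨t (k - 1), t (k - 1 + 1), h2 _⟩, ?_, ?_⟩⟩
      · rw [h3]; exact ⟨k, rfl, rfl⟩
      · rw [h3]; exact ⟨k - 1, rfl, rfl⟩
      · simp
    rw [h4] at hx hy
    rcases hx with ⟨k, rfl⟩ | hx
    · exact Or.inl (key k)
    · rcases hy with ⟨k, rfl⟩ | hy
      · exact Or.inr (key k)
      · exact absurd (hx.trans hy.symm) hxy

/-- A nonempty set of elements of a gap that is closed under passing to the adjacent elements is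
the whole gap. -/
theorem LamSys.IsGap.conn (hG : L.IsGap G) (hn : (gapVerts G).Finite ∨ IsCrown G)
    {S : Set GoodInt} (hS : S ⊆ G) (hne : S.Nonempty)
    (hnext : ∀ I ∈ S, ∀ J ∈ G, J.a = I.b → J ∈ S) (hprev : ∀ I ∈ S, ∀ J ∈ G, J.b = I.a → J ∈ S) :
    S = G := by
  refine Subset.antisymm hS fun N hN => ?_
  rcases hn with hf | ⟨t, p, h1, h2, h3, h4⟩
  · by_contra hNS
    -- Look from `N.a`: the first element of `S` has its predecessor before it.
    have hWf : (S.image fun I => pos N.a I.a).Finite := by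
      refine (hf.image (pos N.a)).subset ?_
      rintro _ ⟨I, hI, rfl⟩
      exact ⟨I.a, hG.a_mem (hS hI), rfl⟩
    obtain ⟨_, ⟨M, hM, rfl⟩, hmin⟩ := hWf.exists_minimal (hne.image _)
    obtain ⟨M', hM'G, hb⟩ := (hG.tip_of_finite hf (hG.a_mem (hS hM))).2
    have hM' := hprev M hM M' hM'G hb
    have hle : pos N.a M.a ≤ pos N.a M'.a := by
      by_contra! h
      exact absurd (hmin ⟨M', hM', rfl⟩ h.le) (not_le.2 h)
    have n1 := mem_gapVerts.1 (hG.a_mem hN) M' hM'G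
    rw [mem_carrier N.a, hb, pos_self] at n1
    have hne0 : pos N.a M.a ≠ 0 := fun h =>
      hNS (hG.eq_of_a hN (hS hM) (pos_eq_zero.1 h).symm ▸ hM)
    have hne1 := mt (pos_inj (p := N.a)).1 M'.ne
    rw [hb] at hne1
    have := pos_nonneg N.a M.a
    unfold Cyc at n1
    grind
  · have key : ∀ k : ℤ, (⟨t k, t (k + 1), h2 k⟩ : GoodInt) ∈ G := fun k => by
      rw [h3]; exact ⟨k, rfl, rfl⟩
    obtain ⟨M, hM⟩ := hne
    have hMG := hS hM
    rw [h3] at hMG hN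
    obtain ⟨j, ja, jb⟩ := hMG
    obtain ⟨k, ka, kb⟩ := hN
    have all : ∀ n : ℤ, (⟨t (j + n), t (j + n + 1), h2 _⟩ : GoodInt) ∈ S := by
      intro n
      induction n using Int.induction_on with
      | zero =>
        have : (⟨t (j + 0), t (j + 0 + 1), h2 _⟩ : GoodInt) = M :=
          GoodInt.ext' (by simp [ja]) (by simp [jb])
        rw [this]; exact hM
      | succ i ih =>
        refine hnext _ ih _ (key _) ?_
        change t _ = t _
        congr 1; ring
      | pred i ih =>
        refine hprev _ ih _ (key _) ?_
        change t _ = t _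
        congr 1; ring
    have : N = ⟨t (j + (k - j)), t (j + (k - j) + 1), h2 _⟩ :=
      GoodInt.ext' (by simp [ka]) (by simp [kb])
    rw [this]
    exact all _

/-- Two gaps one of which contains the other are equal. -/
theorem LamSys.IsGap.eq_of_subset {G' : Set GoodInt} (hn : (gapVerts G).Finite ∨ IsCrown G)
    (hG' : L.IsGap G') (h : G ⊆ G') : G = G' := by
  refine Subset.antisymm h fun N hN => ?_
  obtain ⟨z, hz, J, hJ, hzJ⟩ := no_interior hn N
  rwa [hG'.eq_of_mem hN (h hJ) hz hzJ]

end gap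

/-! ### Leaves crossing an interval, and leaves with a common endpoint -/

/-- In a quite full system, an interval that is not itself an element is crossed by a leaf. -/
theorem LamSys.crossing {L : LamSys} (hq : L.QuiteFull) (I : GoodInt) :
    I ∈ L.mem ∨ ∃ K ∈ L.mem, K.a ∈ I.carrier ∧ K.b ∉ I.carrier := by
  by_contra! hcon
  obtain ⟨hI, hX⟩ := hcon
  have hX' : ∀ K ∈ L.mem, K.b ∈ I.carrier → K.a ∈ I.carrier := fun K hK h =>
    hX K.dual (L.dual_mem K hK) h
  have hIne := mt (pos_inj (p := I.a)).1 I.ne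
  rw [pos_self] at hIne
  have hI0 := pos_nonneg I.a I.b
  have hor : ∀ K ∈ L.mem, Miss {I.a, I.b} K ∨ Miss {I.a, I.b} K.dual := by
    intro K hK
    have h1 := hX K hK
    have h2 := hX' K hK
    have hKne := mt (pos_inj (p := I.a)).1 K.ne
    have := pos_nonneg I.a K.a
    have := pos_nonneg I.a K.b
    simp only [Miss, mem_insert_iff, mem_singleton_iff, forall_eq_or_imp, forall_eq,
      mem_carrier I.a, pos_self, dual_a, dual_b] at *
    unfold Cyc at *
    grind
  -- No leaf crosses `I`, so the endpoints of `I` are vertices of a common gap. The sides of this gap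
  -- inside `I` are closed under adjacency, hence are all of them, although some lie outside `I`.
  have hG := L.maxGap_isGap (C := {I.a, I.b}) (mem_insert _ _) (mem_insert_of_mem _ rfl) I.ne hor
  have hn := hq _ hG
  set G := L.maxGap {I.a, I.b} with hGdef
  have hmiss : ∀ N ∈ G, I.a ∉ N.carrier ∧ I.b ∉ N.carrier := fun N hN =>
    ⟨hN.2.1 _ (mem_insert _ _), hN.2.1 _ (mem_insert_of_mem _ rfl)⟩
  obtain ⟨z, hz, N, hN, hzN⟩ := no_interior hn I
  have hNI : N.a ∈ I.carrier ∧ N.b ∈ I.carrier := by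
    by_contra hcon
    refine hI ?_
    have h1 := hX N hN.1
    have h2 := hX' N hN.1
    have h3 := hmiss N hN
    have hNne := mt (pos_inj (p := I.a)).1 N.ne
    have := pos_nonneg I.a N.a
    have := pos_nonneg I.a N.b
    have : N = I := by
      refine GoodInt.ext' ?_ ?_ <;> rw [← pos_inj (p := I.a)] <;>
      simp only [mem_carrier I.a, pos_self] at * <;> unfold Cyc at * <;> grind
    rw [← this]; exact hN.1
  have hS : {N | N ∈ G ∧ N.a ∈ I.carrier ∧ N.b ∈ I.carrier} = G := by
    refine hG.conn hn (fun N h => h.1) ⟨N, hN, hNI⟩ ?_ ?_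
    · rintro M ⟨_, _, hb⟩ J hJ e
      rw [← e] at hb
      exact ⟨hJ, hb, hX J hJ.1 hb⟩
    · rintro M ⟨_, ha, _⟩ J hJ e
      rw [← e] at ha
      exact ⟨hJ, hX' J hJ.1 ha, ha⟩
  obtain ⟨w, hw, M, hM, hwM⟩ := no_interior hn I.dual
  have h3 := hmiss M hM
  rw [← hS] at hM
  obtain ⟨-, h1, h2⟩ := hM
  have := pos_nonneg I.a w
  simp only [mem_carrier I.a, pos_self, dual_a, dual_b] at *
  unfold Cyc at *
  grind

theorem LamSys.a_mem_E {L : LamSys} {I : GoodInt} (hI : I ∈ L.mem) : I.a ∈ L.E :=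
  mem_iUnion₂.2 ⟨I, hI, Or.inl rfl⟩

theorem LamSys.b_mem_E {L : LamSys} {I : GoodInt} (hI : I ∈ L.mem) : I.b ∈ L.E :=
  mem_iUnion₂.2 ⟨I, hI, Or.inr rfl⟩

theorem LamSys.exists_of_mem_E {L : LamSys} {x : S1} (hx : x ∈ L.E) : ∃ I ∈ L.mem, I.a = x := by
  obtain ⟨I, hI, rfl | rfl⟩ := mem_iUnion₂.1 hx
  · exact ⟨I, hI, rfl⟩
  · exact ⟨I.dual, L.dual_mem I hI, rfl⟩

/-- The endpoints of a quite full system are dense in the circle. -/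
theorem LamSys.E_dense {L : LamSys} (hq : L.QuiteFull) (I : GoodInt) : ∃ e ∈ I.carrier, e ∈ L.E := by
  obtain ⟨z, hz⟩ := carrier_nonempty I
  have hne : I.a ≠ z := fun h => a_not_mem I (h ▸ hz)
  have hlt : ∀ w, w ∈ (⟨I.a, z, hne⟩ : GoodInt).carrier → w ∈ I.carrier := by
    intro w hw
    have := pos_nonneg I.a w
    simp only [mem_carrier I.a, pos_self] at *
    unfold Cyc at *
    grind
  rcases L.crossing hq ⟨I.a, z, hne⟩ with h | ⟨K, hK, h, -⟩
  · exact ⟨z, hz, LamSys.b_mem_E h⟩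
  · exact ⟨K.a, hlt _ h, LamSys.a_mem_E hK⟩

theorem leafGap_verts {M : GoodInt} {y : S1} (hy : y ∈ gapVerts {M, M.dual}) : y = M.a ∨ y = M.b := by
  rw [mem_gapVerts] at hy
  have h1 := hy M (Or.inl rfl)
  have h2 := hy M.dual (Or.inr rfl)
  rcases tri M y with h | h | h | h
  · exact absurd h h1
  · exact absurd h h2
  · exact Or.inl h
  · exact Or.inr h

/-- Two leaves with a common endpoint `x` bound, on the sector between them, a non-leaf gap with
vertex `x`, because the sector contains a point `e` that is not an endpoint of any leaf. The last
leaf `(x, A.b)` before `e` and the first leaf `(B.a, x)` after it are adjacent at `x`, and no leaf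
separates two of the three points `x`, `A.b`, `B.a`, so these are vertices of one gap. -/
theorem LamSys.sector_gap {L : LamSys} (hE : ∀ I : GoodInt, ∃ e ∈ I.carrier, e ∉ L.E)
    {I J : GoodInt} (hI : I ∈ L.mem) (hJ : J ∈ L.mem) (hIJ : J.a = I.a)
    (hlt : pos I.a I.b < pos I.a J.b) :
    ∃ G, L.IsGap G ∧ ¬ IsLeafGap G ∧ I.a ∈ gapVerts G ∧
      (∃ y ∈ gapVerts G, pos I.a I.b ≤ pos I.a y ∧ 0 < pos I.a y ∧ pos I.a y < pos I.a J.b) ∧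
      ∀ y ∈ gapVerts G, y = I.a ∨ (pos I.a I.b ≤ pos I.a y ∧ pos I.a y ≤ pos I.a J.b) := by
  set x := I.a with hx
  have hxx := pos_self x
  have hIb : 0 < pos x I.b := lt_of_le_of_ne (pos_nonneg _ _) fun h => I.ne (pos_eq_zero.1 h.symm).symm
  have hIJb : I.b ≠ J.b := fun h => by rw [h] at hlt; exact lt_irrefl _ hlt
  obtain ⟨e, he, heE⟩ := hE ⟨I.b, J.b, hIJb⟩
  rw [mem_carrier_mk x] at he
  have hJ1 := pos_lt_one x J.b
  have he' : pos x I.b < pos x e ∧ pos x e < pos x J.b := by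
    unfold Cyc at he; grind
  have hxe : x ≠ e := fun h => by rw [← h, pos_self] at he'; grind
  obtain ⟨A, hA, hIA, hAm, hAmax⟩ := L.exists_max (C := {x, e}) (mem_insert _ _)
    (mem_insert_of_mem _ rfl) hxe hI (by
      simp only [Miss, mem_insert_iff, mem_singleton_iff, forall_eq_or_imp, forall_eq,
        mem_carrier x, ← hx, pos_self]
      unfold Cyc; grind)
  obtain ⟨B, hB, hJB, hBm, hBmax⟩ := L.exists_max (C := {x, e}) (mem_insert _ _)
    (mem_insert_of_mem _ rfl) hxe (L.dual_mem J hJ) (by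
      simp only [Miss, mem_insert_iff, mem_singleton_iff, forall_eq_or_imp, forall_eq,
        mem_carrier x, hIJ, dual_a, dual_b, pos_self]
      unfold Cyc; grind)
  simp only [Miss, mem_insert_iff, mem_singleton_iff, forall_eq_or_imp, forall_eq] at hAm hBm
  have hAbe : A.b ≠ e := fun h => heE (h ▸ LamSys.b_mem_E hA)
  have hBae : B.a ≠ e := fun h => heE (h ▸ LamSys.a_mem_E hB)
  have hAa : A.a = x := by
    obtain ⟨z, hz⟩ := carrier_nonempty I
    have h1 := hIA hz
    have h2 := a_not_mem_of_sub hIA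
    rw [← pos_eq_zero]
    have := pos_nonneg x A.a
    simp only [mem_carrier x, ← hx, pos_self] at hz h1 h2 hAm
    unfold Cyc at *
    grind
  have hBb : B.b = x := by
    obtain ⟨z, hz⟩ := carrier_nonempty J.dual
    have h1 := hJB hz
    have h2 := b_not_mem_of_sub hJB
    rw [← pos_eq_zero]
    have := pos_nonneg x B.b
    have := pos_nonneg x z
    simp only [mem_carrier x, hIJ, dual_a, dual_b, pos_self] at hz h1 h2 hBm
    unfold Cyc at *
    grind
  rw [Ne, ← pos_inj (p := x)] at hAbe hBae
  have hAne := mt (pos_inj (p := x)).1 A.ne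
  have hBne := mt (pos_inj (p := x)).1 B.ne
  rw [hAa, hxx] at hAne
  rw [hBb, hxx] at hBne
  have a0 := pos_nonneg x A.b
  have b0 := pos_nonneg x B.a
  have a1 : pos x I.b ≤ pos x A.b ∧ pos x A.b < pos x e := by
    have h2 := b_not_mem_of_sub hIA
    simp only [mem_carrier x, ← hx, pos_self, hAa] at h2 hAm
    unfold Cyc at *
    grind
  have b1 : pos x e < pos x B.a ∧ pos x B.a ≤ pos x J.b := by
    have h2 := a_not_mem_of_sub hJB
    simp only [mem_carrier x, hIJ, dual_a, dual_b, pos_self, hBb] at h2 hBm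
    unfold Cyc at *
    grind
  have hA' : ∀ K ∈ L.mem, K.a = x → ¬ (pos x A.b < pos x K.b ∧ pos x K.b < pos x e) := by
    rintro K hK hKa ⟨h1, h2⟩
    have := hAmax K hK (by
      intro z hz
      simp only [mem_carrier x, hAa, hKa, pos_self] at *
      have := pos_nonneg x z
      unfold Cyc at *
      grind) (by
      simp only [Miss, mem_insert_iff, mem_singleton_iff, forall_eq_or_imp, forall_eq,
        mem_carrier x, hKa, pos_self]
      unfold Cyc; grind)
    rw [this] at h1
    exact lt_irrefl _ h1
  have hB' : ∀ K ∈ L.mem, K.b = x → ¬ (pos x e < pos x K.a ∧ pos x K.a < pos x B.a) := by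
    rintro K hK hKb ⟨h1, h2⟩
    have := hBmax K hK (by
      intro z hz
      simp only [mem_carrier x, hBb, hKb, pos_self] at *
      have := pos_nonneg x z
      unfold Cyc at *
      grind) (by
      simp only [Miss, mem_insert_iff, mem_singleton_iff, forall_eq_or_imp, forall_eq,
        mem_carrier x, hKb, pos_self]
      unfold Cyc; grind)
    rw [this] at h2
    exact lt_irrefl _ h2
  have hor : ∀ K ∈ L.mem, Miss {x, A.b, B.a} K ∨ Miss {x, A.b, B.a} K.dual := by
    intro K hK
    have k1 := L.unl hA hK
    have k2 := L.unl' hA hK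
    have k3 := L.unl hB hK
    have k4 := L.unl' hB hK
    have k5 := hA' K hK
    have k6 := hB' K hK
    have k7 := hA' K.dual (L.dual_mem K hK)
    have k8 := hB' K.dual (L.dual_mem K hK)
    have k9 : pos x K.a ≠ pos x e := fun h => heE (pos_inj.1 h ▸ LamSys.a_mem_E hK)
    have k10 : pos x K.b ≠ pos x e := fun h => heE (pos_inj.1 h ▸ LamSys.b_mem_E hK)
    have hKne := mt (pos_inj (p := x)).1 K.ne
    have := pos_nonneg x K.a
    have := pos_nonneg x K.b
    clear hE hI hJ hAmax hBmax hIA hJB hA' hB'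
    simp only [Miss, mem_insert_iff, mem_singleton_iff, forall_eq_or_imp, forall_eq,
      mem_carrier x, dual_a, dual_b, hxx, hAa, hBb, ← pos_eq_zero (p := x)] at *
    unfold Cyc at *
    grind
  have hxA : x ≠ A.b := fun h => hAne (by rw [← h, hxx])
  have hG := L.maxGap_isGap (C := {x, A.b, B.a}) (mem_insert _ _)
    (mem_insert_of_mem _ (mem_insert _ _)) hxA hor
  have hsub := L.sub_gapVerts {x, A.b, B.a}
  have hxG := hsub (mem_insert _ _)
  have hAG := hsub (mem_insert_of_mem _ (mem_insert _ _))
  have hBG := hsub (mem_insert_of_mem _ (mem_insert_of_mem _ rfl))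
  refine ⟨L.maxGap {x, A.b, B.a}, hG, ?_, hxG, ⟨A.b, hAG, ?_⟩, ?_⟩
  · rintro ⟨M, hM⟩
    rw [hM] at hxG hAG hBG
    have h1 := leafGap_verts hxG
    have h2 := leafGap_verts hAG
    have h3 := leafGap_verts hBG
    have : x ≠ B.a := fun h => hBne (by rw [← h, hxx])
    have : A.b ≠ B.a := fun h => by rw [h] at a1; linarith [a1.2, b1.1]
    grind
  · grind
  · intro y hy
    obtain ⟨A', hA'G, hA'⟩ := L.exists_mem_maxGap (C := {x, A.b, B.a}) (mem_insert _ _)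
      (mem_insert_of_mem _ (mem_insert _ _)) hxA hA (by
        simp only [Miss, mem_insert_iff, mem_singleton_iff, forall_eq_or_imp, forall_eq,
          mem_carrier x, hAa, hxx]
        unfold Cyc; grind)
    obtain ⟨B', hB'G, hB'⟩ := L.exists_mem_maxGap (C := {x, A.b, B.a}) (mem_insert _ _)
      (mem_insert_of_mem _ (mem_insert _ _)) hxA hB (by
        simp only [Miss, mem_insert_iff, mem_singleton_iff, forall_eq_or_imp, forall_eq,
          mem_carrier x, hBb, hxx]
        unfold Cyc; grind)
    have h1 : y ∉ A.carrier := fun h => mem_gapVerts.1 hy A' hA'G (hA' h)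
    have h2 : y ∉ B.carrier := fun h => mem_gapVerts.1 hy B' hB'G (hB' h)
    rw [← pos_eq_zero (p := x)]
    have := pos_nonneg x y
    simp only [mem_carrier x, hAa, hBb, hxx] at h1 h2
    unfold Cyc at h1 h2
    grind

/-- No point is an endpoint of three distinct leaves: otherwise two consecutive sectors between them
would contain distinct non-leaf gaps sharing this vertex, against looseness. -/
theorem LamSys.no_three {L : LamSys} (hE : ∀ I : GoodInt, ∃ e ∈ I.carrier, e ∉ L.E) (hl : L.Loose)
    {I J K : GoodInt} (hI : I ∈ L.mem) (hJ : J ∈ L.mem) (hK : K ∈ L.mem) (hIJ : I.a = J.a)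
    (hIK : I.a = K.a) : I = J ∨ I = K ∨ J = K := by
  have key : ∀ I J K : GoodInt, I ∈ L.mem → J ∈ L.mem → K ∈ L.mem → I.a = J.a → I.a = K.a →
      pos I.a I.b < pos I.a J.b → pos I.a J.b < pos I.a K.b → False := by
    intro I J K hI hJ hK hIJ hIK h1 h2
    obtain ⟨G, hG, hGl, hxG, ⟨y, hyG, hy⟩, -⟩ := L.sector_gap hE hI hJ hIJ.symm h1
    obtain ⟨G', hG', hGl', hxG', -, hv⟩ := L.sector_gap hE hJ hK (hIJ ▸ hIK.symm)
      (by rwa [← hIJ])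
    rw [← hIJ] at hxG' hv
    by_cases h : G = G'
    · subst h
      rcases hv y hyG with h | h
      · rw [h, pos_self] at hy; linarith [hy.2.1]
      · linarith [h.1, hy.2.2]
    · exact Set.disjoint_left.1 (hl G G' hG hG' hGl hGl' h) hxG hxG'
  by_contra! hcon
  have e : ∀ M N : GoodInt, M.a = N.a → M ≠ N → pos I.a M.b ≠ pos I.a N.b := fun M N h h' h2 =>
    h' (GoodInt.ext' h (pos_inj.1 h2))
  have e1 := e I J hIJ hcon.1
  have e2 := e I K hIK hcon.2.1
  have e3 := e J K (hIJ ▸ hIK) hcon.2.2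
  have q1 := key I J K hI hJ hK hIJ hIK
  have q2 := key I K J hI hK hJ hIK hIJ
  have q3 := key J I K hJ hI hK hIJ.symm (hIJ ▸ hIK)
  have q4 := key J K I hJ hK hI (hIJ ▸ hIK) hIJ.symm
  have q5 := key K I J hK hI hJ hIK.symm (hIK ▸ hIJ)
  have q6 := key K J I hK hJ hI (hIK ▸ hIJ) hIK.symm
  rw [← hIJ] at q3 q4
  rw [← hIK] at q5 q6
  rcases lt_or_gt_of_ne e1 with h1 | h1 <;> rcases lt_or_gt_of_ne e2 with h2 | h2 <;>
    rcases lt_or_gt_of_ne e3 with h3 | h3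
  · exact q1 h1 h3
  · exact q2 h2 h3
  · exact (h1.trans h3).asymm h2
  · exact q5 h2 h1
  · exact q3 h1 h2
  · exact (h3.trans h1).asymm h2
  · exact q4 h3 h2
  · exact q6 h3 h1

/-! ### The action of an automorphism on intervals -/

/-- A permutation of the circle that preserves and reflects the cyclic order. -/
def CycMap (g : Equiv.Perm S1) : Prop := ∀ x y z, sbtw (g x) (g y) (g z) ↔ sbtw x y z

/-- The interval `(g a, g b)`, image of `(a, b)`. -/
def GoodInt.map (g : Equiv.Perm S1) (I : GoodInt) : GoodInt :=
  ⟨g I.a, g I.b, g.injective.ne I.ne⟩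

@[simp] theorem map_a (g : Equiv.Perm S1) (I : GoodInt) : (I.map g).a = g I.a := rfl
@[simp] theorem map_b (g : Equiv.Perm S1) (I : GoodInt) : (I.map g).b = g I.b := rfl
@[simp] theorem map_dual (g : Equiv.Perm S1) (I : GoodInt) : I.dual.map g = (I.map g).dual := rfl

theorem map_inj {g : Equiv.Perm S1} {I J : GoodInt} (h : I.map g = J.map g) : I = J :=
  GoodInt.ext' (g.injective (congrArg GoodInt.a h)) (g.injective (congrArg GoodInt.b h))

theorem PosHomeo.cycMap {g : Equiv.Perm S1} (hg : PosHomeo g) : CycMap g := by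
  intro x y z
  refine ⟨fun h => ?_, hg.2.2 x y z⟩
  have h' := hg.2.2 z y x
  rw [sbtw_iff x, pos_self] at h' ⊢
  rw [sbtw_iff (g x), pos_self] at h
  rw [sbtw_iff (g x), pos_self] at h'
  have e1 : pos x x = pos x y → pos (g x) (g x) = pos (g x) (g y) := fun h =>
    pos_inj.2 (congrArg g (pos_inj.1 h))
  have e2 : pos x x = pos x z → pos (g x) (g x) = pos (g x) (g z) := fun h =>
    pos_inj.2 (congrArg g (pos_inj.1 h))
  have e3 : pos x y = pos x z → pos (g x) (g y) = pos (g x) (g z) := fun h =>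
    pos_inj.2 (congrArg g (pos_inj.1 h))
  rw [pos_self, pos_self] at e1 e2
  unfold Cyc at *
  grind

theorem CycMap.symm {g : Equiv.Perm S1} (hg : CycMap g) : CycMap g.symm := by
  intro x y z
  rw [← hg]
  simp

theorem CycMap.mem_map {g : Equiv.Perm S1} (hg : CycMap g) {I : GoodInt} {z : S1} :
    g z ∈ (I.map g).carrier ↔ z ∈ I.carrier := hg _ _ _

theorem CycMap.carrier_map {g : Equiv.Perm S1} (hg : CycMap g) (I : GoodInt) :
    (I.map g).carrier = g '' I.carrier := by
  ext z
  obtain ⟨w, rfl⟩ := g.surjective z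
  rw [hg.mem_map, g.injective.mem_set_image]

theorem LamSys.InAut.map_mem {L : LamSys} {g : Equiv.Perm S1} (hg : L.InAut g) {I : GoodInt}
    (hI : I ∈ L.mem) : I.map g ∈ L.mem := by
  obtain ⟨J, hJ, h⟩ := hg.2 I hI
  rw [← hg.1.cycMap.carrier_map] at h
  rwa [← carrier_inj h]

/-- Based at a fixed point, `g` is increasing in coordinates. -/
theorem CycMap.lt_iff {g : Equiv.Perm S1} (hg : CycMap g) {p : S1} (hp : g p = p) {x y : S1} :
    pos p (g x) < pos p (g y) ↔ pos p x < pos p y := by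
  have h := hg p x y
  have e1 : pos p x = pos p p ↔ pos p (g x) = pos p (g p) := by
    rw [pos_inj, pos_inj]; exact g.injective.eq_iff.symm
  have e2 : pos p y = pos p p ↔ pos p (g y) = pos p (g p) := by
    rw [pos_inj, pos_inj]; exact g.injective.eq_iff.symm
  rw [sbtw_iff p, sbtw_iff p] at h
  rw [hp, pos_self] at *
  have := pos_nonneg p x
  have := pos_nonneg p y
  have := pos_nonneg p (g x)
  have := pos_nonneg p (g y)
  unfold Cyc at h
  grind

/-- An order-preserving `g` that maps elements of `L` to elements of `L` does so for its inverse: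
otherwise the endpoints of some `J ∉ L` with image in `L` are vertices of a gap, and the image of
one of them is an endpoint of three leaves. -/
theorem LamSys.mem_of_map {L : LamSys} (hq : L.QuiteFull) (hl : L.Loose)
    (hE : ∀ I : GoodInt, ∃ e ∈ I.carrier, e ∉ L.E) {g : Equiv.Perm S1} (hg : CycMap g)
    (hL : ∀ I ∈ L.mem, I.map g ∈ L.mem) {J : GoodInt} (hJ : J.map g ∈ L.mem) : J ∈ L.mem := by
  by_contra hJL
  have hor : ∀ I ∈ L.mem, Miss {J.a, J.b} I ∨ Miss {J.a, J.b} I.dual := by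
    intro I hI
    have h1 : I.a ∈ J.carrier → I.b ∉ J.dual.carrier := by
      have := L.unl (hL I hI) hJ
      rwa [← map_dual, map_a, map_b, hg.mem_map, hg.mem_map] at this
    have h2 : I.b ∈ J.carrier → I.a ∉ J.dual.carrier := by
      have := L.unl' (hL I hI) hJ
      rwa [← map_dual, map_a, map_b, hg.mem_map, hg.mem_map] at this
    have hKne := mt (pos_inj (p := J.a)).1 I.ne
    have := pos_nonneg J.a I.a
    have := pos_nonneg J.a I.b
    have := pos_nonneg J.a J.b
    simp only [Miss, mem_insert_iff, mem_singleton_iff, forall_eq_or_imp, forall_eq,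
      mem_carrier J.a, pos_self, dual_a, dual_b] at *
    unfold Cyc at *
    grind
  have hG := L.maxGap_isGap (C := {J.a, J.b}) (mem_insert _ _) (mem_insert_of_mem _ rfl) J.ne hor
  have hsub := L.sub_gapVerts {J.a, J.b}
  have haG := hsub (mem_insert _ _)
  have hbG := hsub (mem_insert_of_mem _ rfl)
  set G := L.maxGap {J.a, J.b}
  have key : ∀ J : GoodInt, J ∉ L.mem → J.map g ∈ L.mem → J.b ∈ gapVerts G →
      ((∃ N ∈ G, N.a = J.a) ∧ ∃ N ∈ G, N.b = J.a) → False := by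
    rintro J hJL hJ hb ⟨⟨N, hN, hNa⟩, N', hN', hNb⟩
    have hNL := hG.1 hN
    have hNL' := L.dual_mem _ (hG.1 hN')
    rcases LamSys.no_three hE hl (hL _ hNL) (hL _ hNL') hJ (by simp [hNa, hNb]) (by simp [hNa])
      with h | h | h
    · have h := map_inj h
      have hl := hG.eq_leaf hN (by rw [h]; exact hN')
      rw [hl] at hb
      rcases leafGap_verts hb with hb | hb
      · exact J.ne (by rw [hb, hNa])
      · rw [GoodInt.ext' hNa hb.symm] at hNL
        exact hJL hNL
    · rw [map_inj h] at hNL; exact hJL hNL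
    · rw [map_inj h] at hNL'; exact hJL hNL'
  rcases hG.tip_or_tip (hq _ hG) haG hbG J.ne with h | h
  · exact key J hJL hJ hbG h
  · refine key J.dual (fun h => hJL ?_) (L.dual_mem _ hJ) haG h
    simpa using L.dual_mem _ h

/-! ### Orbits and the components of the complement of the fixed-point set -/

section orbit

variable {g : Equiv.Perm S1} {u x : S1}

theorem symm_fix (h : g x = x) : g.symm x = x := by
  rw [Equiv.symm_apply_eq]; exact h.symm

theorem fix_of_symm (h : g.symm x = x) : g x = x := by
  rw [Equiv.symm_apply_eq] at h; exact h.symm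

theorem CycMap.le_iff (hg : CycMap g) (hu : g u = u) {x y : S1} :
    pos u (g x) ≤ pos u (g y) ↔ pos u x ≤ pos u y := by
  rw [← not_lt, ← not_lt, hg.lt_iff hu]

/-- In coordinates based at a fixed point the orbit of a point that `g` moves up is increasing. -/
theorem orbit_mono (hg : CycMap g) (hu : g u = u) (hx : pos u x ≤ pos u (g x)) :
    Monotone fun n => pos u (g^[n] x) := by
  refine monotone_nat_of_le_succ fun n => ?_
  induction n with
  | zero => simpa using hx
  | succ n ih =>
    simp only [Function.iterate_succ_apply'] at ih ⊢
    exact (hg.le_iff hu).2 ih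

theorem orbit_anti (hg : CycMap g) (hu : g u = u) (hx : pos u (g x) ≤ pos u x) :
    Antitone fun n => pos u (g^[n] x) := by
  refine antitone_nat_of_succ_le fun n => ?_
  induction n with
  | zero => simpa using hx
  | succ n ih =>
    simp only [Function.iterate_succ_apply'] at ih ⊢
    exact (hg.le_iff hu).2 ih

theorem iterate_fix {f : S1} (hf : g f = f) (n : ℕ) : g^[n] f = f := Function.iterate_fixed hf n

theorem CycMap.iterate_le_iff (hg : CycMap g) (hu : g u = u) {x y : S1} (n : ℕ) :
    pos u (g^[n] x) ≤ pos u (g^[n] y) ↔ pos u x ≤ pos u y := by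
  induction n with
  | zero => rfl
  | succ n ih => rw [Function.iterate_succ_apply', Function.iterate_succ_apply', hg.le_iff hu, ih]

/-- The limit (as a coordinate in `[0,1]` based at the fixed point `u`) of an increasing orbit: the
first fixed point after `x`, where `1` stands for `u` itself. -/
theorem orbit_up (hg : CycMap g) (hu : g u = u) (hx : pos u x ≤ pos u (g x)) :
    ∃ w : ℝ, w ≤ 1 ∧ (∀ n, pos u (g^[n] x) ≤ w) ∧ (∀ t < w, ∃ n, t < pos u (g^[n] x)) ∧
      (w < 1 → g (pt u w) = pt u w) ∧ ∀ f, g f = f → pos u x ≤ pos u f → w ≤ pos u f := by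
  have hb : BddAbove (range fun n => pos u (g^[n] x)) :=
    ⟨1, by rintro _ ⟨n, rfl⟩; exact (pos_lt_one _ _).le⟩
  have hle : ∀ n, pos u (g^[n] x) ≤ ⨆ n, pos u (g^[n] x) := fun n => le_ciSup hb n
  refine ⟨⨆ n, pos u (g^[n] x), ciSup_le fun n => (pos_lt_one _ _).le, hle,
    fun t ht => exists_lt_of_lt_ciSup ht, ?_, ?_⟩
  · intro h1
    set w := ⨆ n, pos u (g^[n] x)
    have hq : pos u (pt u w) = w := pos_pt u ((pos_nonneg _ _).trans (hle 0)) h1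
    rw [← pos_inj (p := u), hq]
    apply le_antisymm
    · by_contra! hlt
      obtain ⟨r, hr1, hr2⟩ := exists_pos_between u ((pos_nonneg _ _).trans (hle 0))
        (pos_lt_one u (g (pt u w))).le hlt
      obtain ⟨s, rfl⟩ := g.surjective r
      rw [hg.lt_iff hu, hq] at hr2
      obtain ⟨n, hn⟩ := exists_lt_of_lt_ciSup hr2
      have := hle (n + 1)
      rw [Function.iterate_succ_apply'] at this
      have := (hg.lt_iff hu).2 hn
      linarith
    · refine ciSup_le fun n => (orbit_mono hg hu hx (Nat.le_succ n)).trans ?_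
      simp only [Nat.succ_eq_add_one, Function.iterate_succ_apply']
      rw [hg.le_iff hu, hq]
      exact hle n
  · intro f hf hxf
    refine ciSup_le fun n => ?_
    rw [← iterate_fix hf n]
    exact (hg.iterate_le_iff hu n).2 hxf

/-- The limit of a decreasing orbit: the last fixed point before `x`. -/
theorem orbit_down (hg : CycMap g) (hu : g u = u) (hx : pos u (g x) ≤ pos u x) :
    ∃ w : S1, g w = w ∧ (∀ n, pos u w ≤ pos u (g^[n] x)) ∧
      (∀ t, pos u w < t → ∃ n, pos u (g^[n] x) < t) ∧
      ∀ f, g f = f → pos u f ≤ pos u x → pos u f ≤ pos u w := by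
  have hb : BddBelow (range fun n => pos u (g^[n] x)) :=
    ⟨0, by rintro _ ⟨n, rfl⟩; exact pos_nonneg _ _⟩
  have hle : ∀ n, ⨅ n, pos u (g^[n] x) ≤ pos u (g^[n] x) := fun n => ciInf_le hb n
  set w := ⨅ n, pos u (g^[n] x)
  have hq : pos u (pt u w) = w :=
    pos_pt u (le_ciInf fun n => pos_nonneg _ _) ((hle 0).trans_lt (pos_lt_one _ _))
  refine ⟨pt u w, ?_, ?_, ?_, ?_⟩
  · rw [← pos_inj (p := u), hq]
    apply le_antisymm
    · refine le_ciInf fun n => le_trans ?_ (orbit_anti hg hu hx (Nat.le_succ n))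
      simp only [Nat.succ_eq_add_one, Function.iterate_succ_apply']
      rw [hg.le_iff hu, hq]
      exact hle n
    · by_contra! hlt
      obtain ⟨r, hr1, hr2⟩ := exists_pos_between u (pos_nonneg _ _)
        ((hle 0).trans (pos_lt_one _ _).le) hlt
      obtain ⟨s, rfl⟩ := g.surjective r
      rw [hg.lt_iff hu, hq] at hr1
      obtain ⟨n, hn⟩ := exists_lt_of_ciInf_lt hr1
      have := hle (n + 1)
      rw [Function.iterate_succ_apply'] at this
      have := (hg.lt_iff hu).2 hn
      linarith
  · rwa [hq]
  · rw [hq]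
    exact fun t ht => exists_lt_of_ciInf_lt ht
  · rw [hq]
    intro f hf hxf
    refine le_ciInf fun n => ?_
    rw [← iterate_fix hf n]
    exact (hg.iterate_le_iff hu n).2 hxf

/-- `(u, v)` is a component of the complement of the fixed-point set of `g`, with distinct
endpoints. It is nonempty, being a good interval. -/
def IsComp (g : Equiv.Perm S1) (u v : S1) : Prop :=
  u ≠ v ∧ g u = u ∧ g v = v ∧ ∀ z, g z = z → ¬ sbtw u z v

theorem IsComp.symm {v : S1} (h : IsComp g u v) : IsComp g.symm u v :=
  ⟨h.1, symm_fix h.2.1, symm_fix h.2.2.1, fun z hz => h.2.2.2 z (fix_of_symm hz)⟩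

theorem IsComp.of_symm {v : S1} (h : IsComp g.symm u v) : IsComp g u v := h.symm

/-- A point that is not fixed lies in a component of the complement of the fixed-point set, whose
endpoints are distinct as soon as there are two fixed points. -/
theorem exists_comp (hg : CycMap g) {a b z : S1} (ha : g a = a) (hb : g b = b) (hab : a ≠ b)
    (hz : g z ≠ z) : ∃ u v, IsComp g u v ∧ sbtw u z v := by
  have main : ∀ g : Equiv.Perm S1, CycMap g → g a = a → g b = b → g z ≠ z →
      pos a z ≤ pos a (g z) → ∃ u v, IsComp g u v ∧ sbtw u z v := by
    intro g hg ha hb hz hle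
    have hle' : pos a (g.symm z) ≤ pos a z := by
      rw [← hg.le_iff ha]; simpa using hle
    obtain ⟨w, hw1, hw2, -, hw3, hw4⟩ := orbit_up hg ha hle
    obtain ⟨u, hu1, hu2, -, hu4⟩ := orbit_down hg.symm (symm_fix ha) hle'
    replace hu1 := fix_of_symm hu1
    have hu4 : ∀ f, g f = f → pos a f ≤ pos a z → pos a f ≤ pos a u := fun f hf =>
      hu4 f (symm_fix hf)
    have h1 := hw2 0
    have h2 := hu2 0
    simp only [Function.iterate_zero, id] at h1 h2
    have huz : pos a u ≠ pos a z := fun h => hz (by rw [← pos_inj.1 h]; exact hu1)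
    have hz0 := pos_nonneg a z
    have hu0 := pos_nonneg a u
    have hz1 := pos_lt_one a z
    rcases hw1.lt_or_eq with hlt | heq
    · have hpw : pos a (pt a w) = w := pos_pt a (by linarith) hlt
      have hwz : pos a (pt a w) ≠ pos a z := fun h => hz (by rw [← pos_inj.1 h]; exact hw3 hlt)
      refine ⟨u, pt a w, ⟨?_, hu1, hw3 hlt, ?_⟩, ?_⟩
      · rw [Ne, ← pos_inj (p := a)]; grind
      · intro f hf hs
        have e1 := hw4 f hf
        have e2 := hu4 f hf
        rw [sbtw_iff a, hpw] at hs
        unfold Cyc at hs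
        grind
      · rw [sbtw_iff a, hpw]; unfold Cyc; grind
    · have hua : pos a u ≠ 0 := by
        intro hua
        have e1 := hw4 b hb
        have e2 := hu4 b hb
        have := pos_lt_one a b
        have : pos a b ≠ 0 := fun h => hab (pos_eq_zero.1 h).symm
        have := pos_nonneg a b
        grind
      refine ⟨u, a, ⟨fun h => hua (pos_eq_zero.2 h), hu1, ha, ?_⟩, ?_⟩
      · intro f hf hs
        have e1 := hw4 f hf
        have e2 := hu4 f hf
        have := pos_lt_one a f
        rw [sbtw_iff a, pos_self] at hs
        have := pos_nonneg a f
        unfold Cyc at hs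
        grind
      · rw [sbtw_iff a, pos_self]; unfold Cyc; grind
  rcases le_total (pos a z) (pos a (g z)) with h | h
  · exact main g hg ha hb hz h
  · obtain ⟨u, v, h1, h2⟩ := main g.symm hg.symm (symm_fix ha) (symm_fix hb)
      (fun h => hz (fix_of_symm h)) (by
        rw [← hg.le_iff ha]; simpa using h)
    exact ⟨u, v, h1.of_symm, h2⟩

end orbit

/-! ### Leaves at the ends of a component -/

theorem iter_a (g : Equiv.Perm S1) (n : ℕ) (I : GoodInt) :
    ((GoodInt.map g)^[n] I).a = g^[n] I.a := by
  induction n with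
  | zero => rfl
  | succ n ih => rw [Function.iterate_succ_apply', map_a, ih, Function.iterate_succ_apply']

theorem iter_b (g : Equiv.Perm S1) (n : ℕ) (I : GoodInt) :
    ((GoodInt.map g)^[n] I).b = g^[n] I.b := by
  induction n with
  | zero => rfl
  | succ n ih => rw [Function.iterate_succ_apply', map_b, ih, Function.iterate_succ_apply']

theorem LamSys.iter_mem {L : LamSys} {g : Equiv.Perm S1} (hL : ∀ I ∈ L.mem, I.map g ∈ L.mem)
    {I : GoodInt} (hI : I ∈ L.mem) (n : ℕ) : (GoodInt.map g)^[n] I ∈ L.mem := by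
  induction n with
  | zero => exact hI
  | succ n ih => rw [Function.iterate_succ_apply']; exact hL _ ih

/-- The union of an ascending sequence of elements of `L` is an element of `L`, and the sequence is
a side sequence for it unless it reaches it. -/
theorem LamSys.ascend {L : LamSys} {c : ℕ → GoodInt} {J : GoodInt} (hc : ∀ n, c n ∈ L.mem)
    (hmono : ∀ n, (c n).carrier ⊆ (c (n + 1)).carrier)
    (hU : ∀ z, z ∈ J.carrier ↔ ∃ n, z ∈ (c n).carrier) :
    J ∈ L.mem ∧ ((∀ n, c n ≠ J) → L.HasSideSeq J) := by
  have hm : Monotone fun n => (c n).carrier := monotone_nat_of_le_succ hmono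
  have hsub : ∀ n, (c n).carrier ⊆ J.carrier := fun n z hz => (hU z).2 ⟨n, hz⟩
  refine ⟨L.chain_closed c hc hmono J (by ext z; rw [hU, mem_iUnion]), fun hne =>
    ⟨c, hc, ?_, fun n => Or.inl (hsub n), c, fun n => Or.inl rfl, ?_, ?_⟩⟩
  · rintro n (h | h)
    · exact hne n h
    · obtain ⟨z, hz⟩ := carrier_nonempty (c n)
      have h1 := hsub n hz
      rw [h] at hz
      exact not_dual_of_mem h1 hz
  · intro z hz
    obtain ⟨N, hN⟩ := (hU z).1 hz
    rw [Filter.mem_liminf_iff_eventually_mem]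
    exact Filter.eventually_atTop.2 ⟨N, fun n hn => hm hn hN⟩
  · intro z hz
    rw [Filter.mem_limsup_iff_frequently_mem] at hz
    obtain ⟨n, hn⟩ := hz.exists
    exact subset_closure (hsub n hn)

/-- Let `K = (x, y)` be a leaf crossing the component `(u, v)` at `x`, with `g` moving `x` towards `v`.
Under `g` the point `x` tends to `v`, and unlinkedness forces `y`, on the other side, to move towards
`v` as well, so that `y` tends to a fixed point `w`. If `w ≠ v`, the limit leaf is `(w, v)`; under `g⁻¹`
the limit is likewise a leaf `(u, W)`, unless `y` tends to `u`. No fixed point lies between `w` and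
`W`, so if one end of the component is not an endpoint of `L`, one of the two limits collapses and
the other one spans the component and the adjacent one.

In coordinates based at `u`, the limit `W` of `y` under `g⁻¹` takes values in `[0, 1]`, and `W = 1` means that it is
`u` itself. -/
theorem adj_core {L : LamSys} {g : Equiv.Perm S1} (hg : CycMap g)
    (hL : ∀ I ∈ L.mem, I.map g ∈ L.mem) (hL' : ∀ I ∈ L.mem, I.map g.symm ∈ L.mem)
    {u v c : S1} {K : GoodInt} (hK : K ∈ L.mem) (hC : IsComp g u v) (hKa : sbtw u K.a v)
    (hKb : ¬ sbtw u K.b v) (hup : pos u K.a ≤ pos u (g K.a)) (hc : g c = c) (hcu : c ≠ u)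
    (hcv : c ≠ v) :
    (v ∉ L.E → ∃ w, ∃ h : u ≠ w, IsComp g v w ∧ sbtw u v w ∧ (⟨u, w, h⟩ : GoodInt) ∈ L.mem ∧
      L.HasSideSeq ⟨u, w, h⟩) ∧
    (u ∉ L.E → ∃ w, ∃ h : w ≠ v, IsComp g w u ∧ sbtw w u v ∧ (⟨w, v, h⟩ : GoodInt) ∈ L.mem ∧
      L.HasSideSeq ⟨w, v, h⟩) := by
  obtain ⟨huv, hu, hv, hno⟩ := hC
  have hno' : ∀ z, g z = z → ¬ (0 < pos u z ∧ pos u z < pos u v) := by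
    intro z hz h
    refine hno z hz ?_
    rw [sbtw_iff u, pos_self]
    exact Or.inl h
  have hβ0 : pos u v ≠ 0 := fun h => huv (pos_eq_zero.1 h).symm
  have hβ1 := pos_lt_one u v
  have hβ := pos_nonneg u v
  set x := K.a with hx
  set y := K.b with hy
  have hx0 := pos_nonneg u x
  have hy0 := pos_nonneg u y
  rw [sbtw_iff u, pos_self] at hKa hKb
  have hX : 0 < pos u x ∧ pos u x < pos u v := by unfold Cyc at hKa; grind
  have hY : pos u y = 0 ∨ pos u v ≤ pos u y := by unfold Cyc at hKb; grind
  have hσu := symm_fix hu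
  have hσv := symm_fix hv
  have hgx : g x ≠ x := fun h => hno' x h hX
  have hσx : pos u (g.symm x) ≤ pos u x := by rw [← hg.le_iff hu]; simpa using hup
  -- the forward orbit of `x` tends to `v`
  have xup : ∀ t < pos u v, ∃ n, t < pos u (g^[n] x) := by
    obtain ⟨w, hw1, hw2, hw3, hw4, hw5⟩ := orbit_up hg hu hup
    have h1 := hw5 v hv hX.2.le
    have h0 := hw2 0
    simp only [Function.iterate_zero, id] at h0
    rcases h1.lt_or_eq with h | h
    · have h2 := hno' _ (hw4 (by linarith))
      rw [pos_pt u (by linarith) (by linarith)] at h2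
      grind
    · rwa [h] at hw3
  have xlt : ∀ n, pos u (g^[n] x) < pos u v := fun n => by
    rw [← iterate_fix hv n, ← not_le, hg.iterate_le_iff hu, not_le]; exact hX.2
  have xpos : ∀ n, 0 < pos u (g^[n] x) := fun n =>
    hX.1.trans_le (orbit_mono hg hu hup (Nat.zero_le n))
  have xmono := fun n => orbit_mono hg hu hup (Nat.le_succ n)
  -- the backward orbit of `x` tends to `u`
  have xdown : ∀ t, 0 < t → ∃ n, pos u (g.symm^[n] x) < t := by
    obtain ⟨w, hw1, hw2, hw3, hw4⟩ := orbit_down hg.symm hσu hσx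
    have h0 := hw2 0
    simp only [Function.iterate_zero, id] at h0
    have : pos u w = 0 := by
      have := hno' w (fix_of_symm hw1)
      have := pos_nonneg u w
      grind
    rwa [this] at hw3
  have xlt' : ∀ n, pos u (g.symm^[n] x) < pos u v := fun n =>
    (orbit_anti hg.symm hσu hσx (Nat.zero_le n)).trans_lt hX.2
  have xpos' : ∀ n, 0 < pos u (g.symm^[n] x) := fun n => by
    have h := (hg.symm.iterate_le_iff hσu (x := x) (y := u) n).not
    rw [iterate_fix hσu n, pos_self] at h
    exact not_le.1 (h.2 (not_le.2 hX.1))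
  have xanti := fun n => orbit_anti hg.symm hσu hσx (Nat.le_succ n)
  simp only [Nat.succ_eq_add_one] at xmono xanti
  -- when `y` is `u` or `v`, then `(u, v)` itself belongs to `L`
  have hbad : (⟨u, v, huv⟩ : GoodInt) ∈ L.mem → (v ∈ L.E ∧ u ∈ L.E) := fun h =>
    ⟨LamSys.b_mem_E h, LamSys.a_mem_E h⟩
  rcases hY with hY | hY
  · have hyu : y = u := pos_eq_zero.1 hY
    have := hbad (LamSys.ascend (c := fun n => ((GoodInt.map g)^[n] K).dual)
      (fun n => L.dual_mem _ (LamSys.iter_mem hL hK n)) (fun n z => by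
        have := xmono n
        have := xpos n
        have := pos_nonneg u z
        simp only [mem_carrier u, dual_a, dual_b, iter_a, iter_b, ← hx, ← hy, hyu, iterate_fix hu,
          pos_self]
        unfold Cyc; grind) (fun z => by
        have := pos_nonneg u z
        simp only [mem_carrier u, dual_a, dual_b, iter_a, iter_b, ← hx, ← hy, hyu, iterate_fix hu,
          pos_self]
        constructor
        · intro h
          obtain ⟨n, hn⟩ := xup (pos u z) (by unfold Cyc at h; grind)
          exact ⟨n, by unfold Cyc at *; grind⟩
        · rintro ⟨n, h⟩
          have := xlt n
          have := xpos n
          unfold Cyc at *; grind)).1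
    exact ⟨fun h => absurd this.1 h, fun h => absurd this.2 h⟩
  rcases hY.eq_or_lt with hY | hY
  · have hyv : y = v := (pos_inj.1 hY).symm
    have := hbad (LamSys.ascend (c := fun n => (GoodInt.map g.symm)^[n] K)
      (fun n => LamSys.iter_mem hL' hK n) (fun n z => by
        have := xanti n
        have := xlt' n
        have := xlt' (n + 1)
        have := pos_nonneg u z
        simp only [mem_carrier u, iter_a, iter_b, ← hx, ← hy, hyv, iterate_fix hσv]
        unfold Cyc; grind) (fun z => by
        have := pos_nonneg u z
        simp only [mem_carrier u, iter_a, iter_b, ← hx, ← hy, hyv, iterate_fix hσv, pos_self]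
        constructor
        · intro h
          obtain ⟨n, hn⟩ := xdown (pos u z) (by unfold Cyc at h; grind)
          exact ⟨n, by unfold Cyc at *; grind⟩
        · rintro ⟨n, h⟩
          have := xlt' n
          have := xpos' n
          unfold Cyc at *; grind)).1
    exact ⟨fun h => absurd this.1 h, fun h => absurd this.2 h⟩
  -- the leaf and its image are unlinked, so `y` moves towards `v`
  have hgy : pos u (g y) ≤ pos u y := by
    by_contra! hlt
    have h1 := L.unl (hL K hK) hK
    have : pos u (g x) ≠ pos u x := fun h => hgx (pos_inj.1 h)
    have := xlt 1
    simp only [mem_carrier u, dual_a, dual_b, map_a, map_b, ← hx, ← hy, Function.iterate_one] at *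
    unfold Cyc at h1
    grind
  have hσy : pos u y ≤ pos u (g.symm y) := by rw [← hg.le_iff hu]; simpa using hgy
  have hcβ : pos u v < pos u c := by
    have h1 := hno' c hc
    have h2 : pos u c ≠ 0 := fun h => hcu (pos_eq_zero.1 h)
    have h3 : pos u c ≠ pos u v := fun h => hcv (pos_inj.1 h)
    have := pos_nonneg u c
    grind
  have hc1 := pos_lt_one u c
  obtain ⟨w, hw1, hw2, hw3, hw4⟩ := orbit_down hg hu hgy
  obtain ⟨W, hW1, hW2, hW3, hW4, hW5⟩ := orbit_up hg.symm hσu hσy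
  have hvw := hw4 v hv hY.le
  have hw0 := hw2 0
  have hW0 := hW2 0
  simp only [Function.iterate_zero, id] at hw0 hW0
  have yanti := fun n => orbit_anti hg hu hgy (Nat.le_succ n)
  have ymono := fun n => orbit_mono hg.symm hσu hσy (Nat.le_succ n)
  simp only [Nat.succ_eq_add_one] at yanti ymono
  have ygt : ∀ n, pos u v < pos u (g^[n] y) := fun n => by
    rw [← iterate_fix hv n, ← not_le, hg.iterate_le_iff hu, not_le]; exact hY
  have ygt' : ∀ n, pos u v < pos u (g.symm^[n] y) := fun n =>
    hY.trans_le (orbit_mono hg.symm hσu hσy (Nat.zero_le n))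
  constructor
  · intro hvE
    -- Otherwise the forward images of the leaf converge to `(w, v)`, and `v` is an endpoint of `L`.
    have hwv : pos u w = pos u v := by
      by_contra hne
      have hwv : w ≠ v := fun h => hne (by rw [h])
      refine hvE (LamSys.b_mem_E (I := ⟨w, v, hwv⟩) (LamSys.ascend
        (c := fun n => ((GoodInt.map g)^[n] K).dual)
        (fun n => L.dual_mem _ (LamSys.iter_mem hL hK n)) (fun n z => ?_) (fun z => ?_)).1)
      · have := xmono n
        have := yanti n
        have := ygt n
        have := ygt (n + 1)
        have := xlt n
        have := xlt (n + 1)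
        simp only [mem_carrier u, dual_a, dual_b, iter_a, iter_b, ← hx, ← hy]
        unfold Cyc; grind
      · simp only [mem_carrier u, dual_a, dual_b, iter_a, iter_b, ← hx, ← hy]
        constructor
        · intro h
          have : pos u w < pos u z ∨ pos u z < pos u v := by unfold Cyc at h; grind
          rcases this with h | h
          · obtain ⟨n, hn⟩ := hw3 _ h
            have := xlt n
            have := ygt n
            exact ⟨n, by unfold Cyc; grind⟩
          · obtain ⟨n, hn⟩ := xup _ h
            have := xlt n
            have := ygt n
            exact ⟨n, by unfold Cyc; grind⟩
        · rintro ⟨n, h⟩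
          have := xlt n
          have := ygt n
          have := hw2 n
          unfold Cyc at *; grind
    -- A third fixed point is not between `w = v` and `W`, so the backward limit is not `u`.
    have hWlt : W < 1 := by
      have := hW5 c (symm_fix hc)
      have := hw4 c hc
      grind
    have hq : pos u (pt u W) = W := pos_pt u (by linarith) hWlt
    have hqf := fix_of_symm (hW4 hWlt)
    have hne : u ≠ pt u W := fun h => by rw [← h, pos_self] at hq; linarith
    have hasc := LamSys.ascend (L := L) (J := ⟨u, pt u W, hne⟩)
      (c := fun n => (GoodInt.map g.symm)^[n] K)
      (fun n => LamSys.iter_mem hL' hK n) (fun n z => by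
        have := xanti n
        have := ymono n
        have := ygt' n
        have := xlt' n
        have := xlt' (n + 1)
        simp only [mem_carrier u, iter_a, iter_b, ← hx, ← hy]
        unfold Cyc; grind) (fun z => by
        have := pos_nonneg u z
        simp only [mem_carrier u, iter_a, iter_b, ← hx, ← hy, pos_self, hq]
        constructor
        · intro h
          have h : 0 < pos u z ∧ pos u z < W := by unfold Cyc at h; grind
          obtain ⟨n, hn⟩ := xdown _ h.1
          obtain ⟨m, hm⟩ := hW3 _ h.2
          have := orbit_anti hg.symm hσu hσx (le_max_left n m)
          have := orbit_mono hg.symm hσu hσy (le_max_right n m)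
          exact ⟨max n m, by unfold Cyc; grind⟩
        · rintro ⟨n, h⟩
          have := xlt' n
          have := ygt' n
          have := xpos' n
          have := hW2 n
          unfold Cyc at *; grind)
    refine ⟨pt u W, hne, ⟨fun h => ?_, hv, hqf, ?_⟩, ?_, hasc.1, hasc.2 fun n h => ?_⟩
    · rw [h, hq] at hY; linarith
    · intro f hf hs
      have := hW5 f (symm_fix hf)
      have := hw4 f hf
      rw [sbtw_iff u, hq] at hs
      unfold Cyc at hs; grind
    · rw [sbtw_iff u, hq, pos_self]; unfold Cyc; grind
    · have h := congrArg GoodInt.a h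
      simp only [iter_a, ← hx] at h
      have := xpos' n
      rw [h, pos_self] at this
      exact lt_irrefl _ this
  · intro huE
    -- Otherwise the backward images of the leaf converge to `(u, W)`, and `u` is an endpoint of `L`.
    have hW : W = 1 := by
      by_contra hne
      have hWlt : W < 1 := lt_of_le_of_ne hW1 hne
      have hq : pos u (pt u W) = W := pos_pt u (by linarith) hWlt
      have hne : u ≠ pt u W := fun h => by rw [← h, pos_self] at hq; linarith
      refine huE (LamSys.a_mem_E (I := ⟨u, pt u W, hne⟩) (LamSys.ascend
        (c := fun n => (GoodInt.map g.symm)^[n] K)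
        (fun n => LamSys.iter_mem hL' hK n) (fun n z => ?_) (fun z => ?_)).1)
      · have := xanti n
        have := ymono n
        have := ygt' n
        have := xlt' n
        have := xlt' (n + 1)
        simp only [mem_carrier u, iter_a, iter_b, ← hx, ← hy]
        unfold Cyc; grind
      · have := pos_nonneg u z
        simp only [mem_carrier u, iter_a, iter_b, ← hx, ← hy, pos_self, hq]
        constructor
        · intro h
          have h : 0 < pos u z ∧ pos u z < W := by unfold Cyc at h; grind
          obtain ⟨n, hn⟩ := xdown _ h.1
          obtain ⟨m, hm⟩ := hW3 _ h.2
          have := orbit_anti hg.symm hσu hσx (le_max_left n m)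
          have := orbit_mono hg.symm hσu hσy (le_max_right n m)
          exact ⟨max n m, by unfold Cyc; grind⟩
        · rintro ⟨n, h⟩
          have := xlt' n
          have := ygt' n
          have := xpos' n
          have := hW2 n
          unfold Cyc at *; grind
    -- A third fixed point is not between `w` and `W = 1`, so the forward limit is not `v`.
    have hcw : pos u c ≤ pos u w := by
      have := hW5 c (symm_fix hc)
      have := hw4 c hc
      grind
    have hwv : w ≠ v := fun h => by rw [h] at hcw; linarith
    have hw1' := pos_lt_one u w
    have hasc := LamSys.ascend (L := L) (J := ⟨w, v, hwv⟩)
        (c := fun n => ((GoodInt.map g)^[n] K).dual)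
        (fun n => L.dual_mem _ (LamSys.iter_mem hL hK n)) (fun n z => by
          have := xmono n
          have := yanti n
          have := ygt n
          have := ygt (n + 1)
          have := xlt n
          have := xlt (n + 1)
          simp only [mem_carrier u, dual_a, dual_b, iter_a, iter_b, ← hx, ← hy]
          unfold Cyc; grind) (fun z => by
          simp only [mem_carrier u, dual_a, dual_b, iter_a, iter_b, ← hx, ← hy]
          constructor
          · intro h
            have : pos u w < pos u z ∨ pos u z < pos u v := by unfold Cyc at h; grind
            rcases this with h | h
            · obtain ⟨n, hn⟩ := hw3 _ h
              have := xlt n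
              have := ygt n
              exact ⟨n, by unfold Cyc; grind⟩
            · obtain ⟨n, hn⟩ := xup _ h
              have := xlt n
              have := ygt n
              exact ⟨n, by unfold Cyc; grind⟩
          · rintro ⟨n, h⟩
            have := xlt n
            have := ygt n
            have := hw2 n
            unfold Cyc at *; grind)
    refine ⟨w, hwv, ⟨fun h => ?_, hw1, hu, ?_⟩, ?_, hasc.1, hasc.2 fun n h => ?_⟩
    · rw [h, pos_self] at hcw; linarith
    · intro f hf hs
      have := hW5 f (symm_fix hf)
      have := hw4 f hf
      have := pos_lt_one u f
      have := pos_nonneg u f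
      rw [sbtw_iff u, pos_self] at hs
      unfold Cyc at hs; grind
    · rw [sbtw_iff u, pos_self]; unfold Cyc; grind
    · have h := congrArg GoodInt.b h
      simp only [dual_b, iter_a, ← hx] at h
      have := xlt n
      rw [h] at this
      exact lt_irrefl _ this

/-! ### Gaps spanned by the fixed points -/

/-- The standing hypotheses on a lamination system `L` and a circle map `g` preserving it: `g` has
at least three fixed points, and no interval consists of endpoints of `L` only. -/
structure Acts (L : LamSys) (g : Equiv.Perm S1) : Prop where
  cyc : CycMap g
  qf : L.QuiteFull
  loose : L.Loose
  free : ∀ I : GoodInt, ∃ e ∈ I.carrier, e ∉ L.E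
  maps : ∀ I ∈ L.mem, I.map g ∈ L.mem
  maps_symm : ∀ I ∈ L.mem, I.map g.symm ∈ L.mem
  three : ∀ u v : S1, ∃ c, g c = c ∧ c ≠ u ∧ c ≠ v

/-- If one end of a component of the complement of the fixed-point set is not an endpoint of `L`,
then there is an element of `L` over this component and the adjacent one, and it has a side
sequence. -/
theorem Acts.adj {L : LamSys} {g : Equiv.Perm S1} (h : Acts L g) {u v : S1} (hC : IsComp g u v) :
    (v ∉ L.E → ∃ w, ∃ h : u ≠ w, IsComp g v w ∧ sbtw u v w ∧ (⟨u, w, h⟩ : GoodInt) ∈ L.mem ∧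
      L.HasSideSeq ⟨u, w, h⟩) ∧
    (u ∉ L.E → ∃ w, ∃ h : w ≠ v, IsComp g w u ∧ sbtw w u v ∧ (⟨w, v, h⟩ : GoodInt) ∈ L.mem ∧
      L.HasSideSeq ⟨w, v, h⟩) := by
  rcases LamSys.crossing h.qf ⟨u, v, hC.1⟩ with hI | ⟨K, hK, hKa, hKb⟩
  · exact ⟨fun h => absurd (LamSys.b_mem_E hI) h, fun h => absurd (LamSys.a_mem_E hI) h⟩
  obtain ⟨c, hc, hcu, hcv⟩ := h.three u v
  rcases le_total (pos u K.a) (pos u (g K.a)) with hup | hup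
  · exact adj_core h.cyc h.maps h.maps_symm hK hC hKa hKb hup hc hcu hcv
  · have hup' : pos u K.a ≤ pos u (g.symm K.a) := by
      rw [← h.cyc.le_iff hC.2.1]; simpa using hup
    obtain ⟨h1, h2⟩ := adj_core h.cyc.symm h.maps_symm (by simpa using h.maps) hK hC.symm hKa hKb
      hup' (symm_fix hc) hcu hcv
    refine ⟨fun hv => ?_, fun hu => ?_⟩
    · obtain ⟨w, hw, h3, h4⟩ := h1 hv
      exact ⟨w, hw, h3.of_symm, h4⟩
    · obtain ⟨w, hw, h3, h4⟩ := h2 hu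
      exact ⟨w, hw, h3.of_symm, h4⟩

/-- Two strongly transverse lamination systems preserved by `g`. -/
structure ActsPair (L L' : LamSys) (g : Equiv.Perm S1) : Prop where
  fst : Acts L g
  snd : Acts L' g
  disj : ∀ x ∈ L.E, x ∉ L'.E

theorem ActsPair.swap {L L' : LamSys} {g : Equiv.Perm S1} (h : ActsPair L L' g) :
    ActsPair L' L g := ⟨h.snd, h.fst, fun x hx hx' => h.disj x hx' hx⟩

/-- `N` is a real side of `L` spanning two adjacent components of the complement of the fixed-point
set, which meet at an endpoint `o` of the other system `L'`. -/
def IsSpan (L L' : LamSys) (g : Equiv.Perm S1) (N : GoodInt) : Prop :=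
  N.dual ∈ L.mem ∧ N ∈ L.mem ∧ L.HasSideSeq N ∧
    ∃ o ∈ N.carrier, IsComp g N.a o ∧ IsComp g o N.b ∧ o ∈ L'.E

section
variable {L L' : LamSys} {g : Equiv.Perm S1}

/-- Exactly one end of a component is an endpoint of `L`, as the two systems have no common endpoints;
the element of `L` ending there and given by `Acts.adj` is a span. -/
theorem ActsPair.exists_span (h : ActsPair L L' g) {u v : S1} (hC : IsComp g u v) :
    ∃ N, IsSpan L L' g N := by
  by_cases hv : v ∈ L.E
  · by_cases hu : u ∈ L.E
    · obtain ⟨w, hw, -, -, h1, -⟩ := (h.snd.adj hC).1 (h.disj v hv)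
      exact absurd (LamSys.a_mem_E h1) (h.disj u hu)
    · obtain ⟨w, hw, h1, h2, h3, h4⟩ := (h.fst.adj hC).2 hu
      obtain ⟨w', hw', -, -, h5, -⟩ := (h.snd.adj hC).1 (h.disj v hv)
      exact ⟨⟨w, v, hw⟩, L.dual_mem _ h3, h3, h4, u, h2, h1, hC, LamSys.a_mem_E h5⟩
  · obtain ⟨w, hw, h1, h2, h3, h4⟩ := (h.fst.adj hC).1 hv
    obtain ⟨w', hw', -, -, h5, -⟩ := (h.snd.adj hC).2 (h.disj u (LamSys.a_mem_E h3))
    exact ⟨⟨u, w, hw⟩, L.dual_mem _ h3, h3, h4, v, h2, hC, h1, LamSys.b_mem_E h5⟩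

/-- A span is followed by another one: the component on its right-hand end ends at an endpoint of `L'`,
which is then the middle of the next span. -/
theorem ActsPair.next_span (h : ActsPair L L' g) {N : GoodInt} (hN : IsSpan L L' g N) :
    ∃ N', IsSpan L L' g N' ∧ N'.a = N.b := by
  obtain ⟨-, hN, -, o, -, h1, h2, h3⟩ := hN
  obtain ⟨w, hw, h4, h5, h6, -⟩ := (h.snd.adj h2).1 (h.disj _ (LamSys.b_mem_E hN))
  have hw' := LamSys.b_mem_E h6
  obtain ⟨v, hv, h7, h8, h9, h10⟩ := (h.fst.adj h4).1 fun hh => h.disj _ hh hw'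
  exact ⟨⟨N.b, v, hv⟩, ⟨L.dual_mem _ h9, h9, h10, w, h8, h4, h7, hw'⟩, rfl⟩

theorem ActsPair.prev_span (h : ActsPair L L' g) {N : GoodInt} (hN : IsSpan L L' g N) :
    ∃ N', IsSpan L L' g N' ∧ N'.b = N.a := by
  obtain ⟨-, hN, -, o, -, h1, h2, h3⟩ := hN
  obtain ⟨w, hw, h4, h5, h6, -⟩ := (h.snd.adj h1).2 (h.disj _ (LamSys.a_mem_E hN))
  have hw' := LamSys.a_mem_E h6
  obtain ⟨v, hv, h7, h8, h9, h10⟩ := (h.fst.adj h4).2 fun hh => h.disj _ hh hw'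
  exact ⟨⟨v, N.a, hv⟩, ⟨L.dual_mem _ h9, h9, h10, w, h8, h7, h4, hw'⟩, rfl⟩

/-- The only fixed point in an interval made of two adjacent components is the middle one. -/
theorem IsComp.unique {N : GoodInt} {o z : S1} (h1 : IsComp g N.a o)
    (h2 : IsComp g o N.b) (hz : g z = z) (hzN : z ∈ N.carrier) : z = o := by
  have h3 := h1.2.2.2 z hz
  have h4 := h2.2.2.2 z hz
  simp only [sbtw_iff N.a, mem_carrier N.a, pos_self] at *
  refine (pos_inj (p := N.a)).1 ?_
  have := pos_nonneg N.a z
  have := pos_nonneg N.a o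
  have := pos_nonneg N.a N.b
  unfold Cyc at *
  grind

theorem LamSys.isGap_leaf {M : GoodInt} (hM : M ∈ L.mem) : L.IsGap {M, M.dual} := by
  have hd : Disjoint M.carrier M.dual.carrier :=
    Set.disjoint_left.2 fun z h1 h2 => not_dual_of_mem h1 h2
  refine ⟨?_, ?_, fun I hI => ?_⟩
  · rintro I (rfl | rfl)
    · exact hM
    · exact L.dual_mem _ hM
  · rintro I (rfl | rfl) J (rfl | rfl) hne
    · exact absurd rfl hne
    · exact hd
    · exact hd.symm
    · exact absurd rfl hne
  · rcases L.unlinked I hI M hM with h | h | h | h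
    · exact ⟨M, by simp, Or.inl h⟩
    · exact ⟨M, by simp, Or.inr h⟩
    · exact ⟨M.dual, by simp, Or.inl h⟩
    · exact ⟨M.dual, by simp, Or.inr h⟩

/-- There is a gap all of whose elements are spans: either a leaf, or the gap which is complementary
to the endpoints of two consecutive spans; by looseness the sides of this gap adjacent to a span are
again spans. -/
theorem ActsPair.exists_gap (h : ActsPair L L' g) {M : GoodInt} (hM : IsSpan L L' g M) :
    ∃ G, L.IsGap G ∧ ∀ N ∈ G, IsSpan L L' g N := by
  by_cases hdual : ∃ N, IsSpan L L' g N ∧ IsSpan L L' g N.dual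
  · obtain ⟨N, h1, h2⟩ := hdual
    refine ⟨{N, N.dual}, LamSys.isGap_leaf h1.2.1, ?_⟩
    rintro I (rfl | rfl)
    · exact h1
    · exact h2
  push Not at hdual
  have n3 := fun {I J K : GoodInt} => LamSys.no_three (I := I) (J := J) (K := K) h.fst.free h.fst.loose
  obtain ⟨M2, hM2, hMM⟩ := h.next_span hM
  have hne : M2 ≠ M.dual := fun hh => hdual M hM (hh ▸ hM2)
  have hb : M2.b ∉ M.carrier := fun hmem => by
    obtain ⟨-, -, -, o, -, h1, h2, h3⟩ := hM
    obtain ⟨-, h4, -, o', -, -, h5, -⟩ := hM2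
    have := IsComp.unique h1 h2 h5.2.2.1 hmem
    exact h.disj _ (LamSys.b_mem_E h4) (this ▸ h3)
  set C : Set S1 := {M.a, M.b, M2.b} with hCdef
  have hor : ∀ I ∈ L.mem, Miss C I ∨ Miss C I.dual := by
    intro I hI
    have u1 := L.unl hM.2.1 hI
    have u2 := L.unl' hM.2.1 hI
    have u3 := L.unl hM2.2.1 hI
    have u4 := L.unl' hM2.2.1 hI
    rw [hMM] at u3 u4
    have key : ∀ J ∈ L.mem, J.a = M.b → M.a ∉ J.carrier ∨ M2.b ∉ J.dual.carrier := by
      intro J hJ hJa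
      rcases n3 hJ hM2.2.1 hM.1 (by rw [hJa, hMM]) (by rw [hJa, dual_a]) with hh | hh | hh
      · right; rw [hh]; exact a_not_mem M2.dual
      · left; rw [hh]; exact b_not_mem M.dual
      · exact absurd hh hne
    have key2 : ∀ J ∈ L.mem, J.a = M.b → M.a ∉ J.dual.carrier ∨ M2.b ∉ J.carrier := by
      intro J hJ hJa
      rcases n3 hJ hM2.2.1 hM.1 (by rw [hJa, hMM]) (by rw [hJa, dual_a]) with hh | hh | hh
      · right; rw [hh]; exact b_not_mem M2
      · left; rw [hh]; exact a_not_mem M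
      · exact absurd hh hne
    have k1 := key I hI
    have k2 := key2 I hI
    have k3 := key _ (L.dual_mem _ hI)
    have k4 := key2 _ (L.dual_mem _ hI)
    have t := tri I M.b
    have d1 := fun hh => not_dual_of_mem (I := I) (z := M.a) hh
    have d2 := fun hh => not_dual_of_mem (I := I) (z := M.b) hh
    have d3 := fun hh => not_dual_of_mem (I := I) (z := M2.b) hh
    simp only [dual_dual, dual_a] at k3 k4
    simp only [Miss, hCdef, mem_insert_iff, mem_singleton_iff, forall_eq_or_imp, forall_eq]
    grind
  have hMm : Miss C M := by
    simp only [Miss, hCdef, mem_insert_iff, mem_singleton_iff, forall_eq_or_imp, forall_eq]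
    exact ⟨a_not_mem M, b_not_mem M, hb⟩
  have hG := L.maxGap_isGap (C := C) (c := M.a) (d := M.b) (by simp [C]) (by simp [C]) M.ne hor
  have hn := h.fst.qf _ hG
  have hMG : M ∈ L.maxGap C := by
    obtain ⟨J, hJ, hMJ⟩ := L.exists_mem_maxGap (C := C) (c := M.a) (d := M.b) (by simp [C])
      (by simp [C]) M.ne hM.2.1 hMm
    obtain ⟨z, hz⟩ := carrier_nonempty M
    have := sub_of (hJ.2.1 M.a (by simp [C])) (hJ.2.1 M.b (by simp [C])) (hMJ hz) hz
    rwa [← carrier_inj (hMJ.antisymm this)] at hJ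
  -- the gap is not a leaf, since `M2.b` is a vertex of it in the interior of `M.dual`
  have hleaf : ∀ N ∈ L.maxGap C, N.dual ∉ L.maxGap C := fun N h1 h2 => by
    have h3 := hG.eq_leaf h1 h2
    have hMd : M.dual ∈ L.maxGap C := by
      rw [h3] at hMG ⊢
      rcases hMG with hh | hh
      · rw [hh]; simp
      · rw [mem_singleton_iff.1 hh]; simp
    have h4 := hMd.2.1 M2.b (by simp [C])
    have h5 := tri M M2.b
    have h6 : M2.b ≠ M.b := hMM ▸ M2.ne.symm
    have h7 : M2.b ≠ M.a := fun hh => hne (GoodInt.ext' hMM hh)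
    tauto
  have hS := hG.conn hn (S := {N | N ∈ L.maxGap C ∧ IsSpan L L' g N}) (fun N hN => hN.1)
    ⟨M, hMG, hM⟩ (fun N hN J hJ hJN => by
      obtain ⟨N', h1, h2⟩ := h.next_span hN.2
      refine ⟨hJ, ?_⟩
      rcases n3 hN.2.1 h1.2.1 hJ.1 (by rw [h2, dual_a]) (by rw [hJN, dual_a]) with hh | hh | hh
      · exact absurd (hh ▸ h1) (hdual N hN.2)
      · exact absurd (hh ▸ hJ) (hleaf N hN.1)
      · exact hh ▸ h1) (fun N hN J hJ hJN => by
      obtain ⟨N', h1, h2⟩ := h.prev_span hN.2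
      refine ⟨hJ, ?_⟩
      rcases n3 hN.2.2.1 h1.1 (L.dual_mem _ hJ.1) (by rw [dual_a, h2]) (by rw [dual_a, hJN])
        with hh | hh | hh
      · have := congrArg GoodInt.dual hh
        rw [dual_dual] at this
        exact absurd (this ▸ h1) (hdual N hN.2)
      · rw [hh] at hN
        exact absurd hN.1 (hleaf J hJ)
      · have := congrArg GoodInt.dual hh
        rw [dual_dual, dual_dual] at this
        exact this ▸ h1)
  refine ⟨_, hG, fun N hN => ?_⟩
  rw [← hS] at hN
  exact hN.2
end

/-! ### Existence and uniqueness of the pair of gaps -/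

section
variable {L L' : LamSys} {g : Equiv.Perm S1} {G H G' H' : Set GoodInt}

/-- The endpoints of a span are fixed, and its interior contains exactly one fixed point. -/
theorem IsSpan.fix {N : GoodInt} (hN : IsSpan L L' g N) :
    g N.a = N.a ∧ g N.b = N.b ∧
      ∃ o ∈ N.carrier, o ∈ L'.E ∧ g o = o ∧ ∀ z ∈ N.carrier, g z = z → z = o := by
  obtain ⟨-, -, -, o, ho, h1, h2, h3⟩ := hN
  exact ⟨h1.2.1, h2.2.2.1, o, ho, h3, h2.2.1, fun z hz hf => IsComp.unique h1 h2 hf hz⟩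

/-- The vertices of a gap made of spans are fixed points. -/
theorem ActsPair.verts_fix (h : ActsPair L L' g) (hG : L.IsGap G)
    (hS : ∀ N ∈ G, IsSpan L L' g N) {z : S1} (hz : z ∈ gapVerts G) : g z = z := by
  by_contra hne
  obtain ⟨a, ha, -, -⟩ := h.fst.three z z
  obtain ⟨b, hb, hba, -⟩ := h.fst.three a a
  obtain ⟨u, v, hC, hs⟩ := exists_comp h.fst.cyc ha hb hba.symm hne
  -- an element of the gap meeting the component of `z` contains it
  obtain ⟨y, hy, J, hJ, hyJ⟩ := no_interior (h.fst.qf _ hG) ⟨u, v, hC.1⟩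
  obtain ⟨h1, h2, -⟩ := (hS J hJ).fix
  exact mem_gapVerts.1 hz J hJ
    (sub_of (I := ⟨u, v, hC.1⟩) (hC.2.2.2 _ h1) (hC.2.2.2 _ h2) hy hyJ hs)

/-- A fixed point that is not a vertex of the first gap is the middle of a span, hence an endpoint of the
other system, and cannot be the middle of a span of that system. -/
theorem ActsPair.fix_mem_verts (h : ActsPair L L' g)
    (hS : ∀ N ∈ G, IsSpan L L' g N) (hT : ∀ N ∈ H, IsSpan L' L g N) {N : GoodInt} (hN : N ∈ G)
    {z : S1} (hz : z ∈ N.carrier) (hf : g z = z) : z ∈ gapVerts H := by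
  by_contra hcon
  obtain ⟨K, hK, hzK⟩ := not_mem_gapVerts.1 hcon
  obtain ⟨-, -, o, -, h1, -, h2⟩ := (hS N hN).fix
  obtain ⟨-, -, o', -, h1', -, h2'⟩ := (hT K hK).fix
  exact h.disj z ((h2' z hzK hf) ▸ h1') ((h2 z hz hf) ▸ h1)

theorem ActsPair.existsUnique_vert (h : ActsPair L L' g) (hH : L'.IsGap H)
    (hS : ∀ N ∈ G, IsSpan L L' g N) (hT : ∀ N ∈ H, IsSpan L' L g N) :
    ∀ I ∈ G, ∃! x : S1, x ∈ I.carrier ∩ gapVerts H := by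
  intro I hI
  obtain ⟨-, -, o, h0, -, h1, h2⟩ := (hS I hI).fix
  exact ⟨o, ⟨h0, h.fix_mem_verts hS hT hI h0 h1⟩, fun z hz =>
    h2 z hz.1 (h.swap.verts_fix hH hT hz.2)⟩

theorem mapsGapOnto_of_span (hg : CycMap g) (hS : ∀ N ∈ G, IsSpan L L' g N) :
    MapsGapOnto g G := by
  have key : ∀ I ∈ G, I.carrier = ⇑g '' I.carrier := fun I hI => by
    obtain ⟨h1, h2, -⟩ := (hS I hI).fix
    rw [← hg.carrier_map, GoodInt.ext' (I := I.map g) (J := I) h1 h2]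
  exact ⟨fun I hI => ⟨I, hI, key I hI⟩, fun I hI => ⟨I, hI, key I hI⟩⟩

/-- If `K` meets `I`, contains no left endpoint of `I` and does not start inside `I`, then both start at the
same point. -/
theorem left_end {I K : GoodInt} {q : S1} (h1 : K.a ∉ I.carrier)
    (h3 : q ∈ I.carrier) (h4 : q ∈ K.carrier) (h5 : I.a ∉ K.carrier) : K.a = I.a := by
  rw [← pos_inj (p := I.a)]
  simp only [mem_carrier I.a, pos_self] at *
  have := pos_nonneg I.a K.a
  have := pos_nonneg I.a K.b
  have := pos_nonneg I.a q
  have := pos_nonneg I.a I.b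
  unfold Cyc at *
  grind

/-- An element of a gap of an interleaving pair filling the fixed-point set contains exactly one
fixed point. -/
theorem LamSys.IsGap.one_fix (hv : ∀ I ∈ G, ∃! x : S1, x ∈ I.carrier ∩ gapVerts H)
    (hF : gapVerts G ∪ gapVerts H = FixSet g) {N : GoodInt} (hN : N ∈ G) :
    ∃ z ∈ N.carrier, z ∈ gapVerts H ∧ g z = z ∧ ∀ f ∈ N.carrier, g f = f → f = z := by
  obtain ⟨z, ⟨h1, h2⟩, h3⟩ := hv N hN
  refine ⟨z, h1, h2, hF.subset (Or.inr h2), fun f hf hgf => h3 f ⟨hf, ?_⟩⟩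
  rcases hF.superset hgf with h | h
  · exact absurd hf (mem_gapVerts.1 h N hN)
  · exact h

/-- Of two interleaving pairs of gaps filling the fixed-point set, the first gap of one is contained
in the first gap of the other: the left endpoint of a side of one is not in the interior of a side of the other, because the component to
its right would then be part of a side in the transverse system with this same endpoint. -/
theorem gap_subset (hE : ∀ x ∈ L.E, x ∉ L'.E) (hq : L.QuiteFull) (hq' : L'.QuiteFull)
    (hG : L.IsGap G) (hG' : L.IsGap G') (hH' : L'.IsGap H')
    (hv : ∀ I ∈ G, ∃! x : S1, x ∈ I.carrier ∩ gapVerts H)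
    (hv' : ∀ I ∈ G', ∃! x : S1, x ∈ I.carrier ∩ gapVerts H')
    (hF : gapVerts G ∪ gapVerts H = FixSet g) (hF' : gapVerts G' ∪ gapVerts H' = FixSet g) :
    G ⊆ G' := by
  intro N hN
  obtain ⟨z, hzN, -, hzf, hzu⟩ := LamSys.IsGap.one_fix hv hF hN
  have hxf : g N.a = N.a := hF.subset (Or.inl (hG.a_mem hN))
  have hyf : g N.b = N.b := hF.subset (Or.inl (hG.b_mem hN))
  have hxz : N.a ≠ z := fun hh => a_not_mem N (hh ▸ hzN)
  set I : GoodInt := ⟨N.a, z, hxz⟩ with hI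
  have hIf : ∀ f, g f = f → f ∉ I.carrier := by
    intro f hf hfI
    have : f ∈ N.carrier := by
      have := pos_nonneg N.a z
      simp only [hI, mem_carrier N.a, pos_self] at *
      unfold Cyc at *
      grind
    have := hzu f this hf
    rw [this] at hfI
    exact b_not_mem I hfI
  -- Otherwise the component to the right of `N.a` lies in an element of `H'` starting at `N.a`.
  have hx : N.a ∈ gapVerts G' := by
    by_contra hcon
    have hxH : N.a ∈ gapVerts H' := (hF'.superset hxf).resolve_left hcon
    obtain ⟨q, hq1, K, hK, hqK⟩ := no_interior (hq' _ hH') I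
    have := left_end (I := I) (hIf _ (hF'.subset (Or.inr (hH'.a_mem hK)))) hq1 hqK
      (mem_gapVerts.1 hxH K hK)
    refine hE N.a (LamSys.a_mem_E (hG.1 hN)) ?_
    have h2 := LamSys.a_mem_E (hH'.1 hK)
    rwa [this] at h2
  obtain ⟨q, hq1, K, hK, hqK⟩ := no_interior (hq _ hG') I
  have hKa : g K.a = K.a := hF'.subset (Or.inl (hG'.a_mem hK))
  have hKb : g K.b = K.b := hF'.subset (Or.inl (hG'.b_mem hK))
  have ha : K.a = N.a := left_end (I := I) (hIf _ hKa) hq1 hqK (mem_gapVerts.1 hx K hK)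
  obtain ⟨z', hzK, -, hzf', hzu'⟩ := LamSys.IsGap.one_fix hv' hF' hK
  have hb : K.b = N.b := by
    have e1 := hzu K.b
    have e2 := hzu z'
    have e3 := hzu' N.b
    have e4 := hzu' z
    have n1 := mt (pos_inj (p := N.a)).1 N.ne
    have n2 := mt (pos_inj (p := N.a)).1 K.ne
    simp only [mem_carrier N.a, pos_self, ha, ← pos_inj (p := N.a)] at *
    have := pos_nonneg N.a N.b
    have := pos_nonneg N.a K.b
    have := pos_nonneg N.a z
    have := pos_nonneg N.a z'
    unfold Cyc at *
    grind
  rwa [← GoodInt.ext' ha hb]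

end

/-- a nontrivial automorphism of a pseudo-fibered pair with more
than two fixed points preserves a unique interleaving pair of real gaps, whose
vertices are exactly the fixed points. -/
theorem statement14 (L1 L2 : LamSys) (hpf : PseudoFibered L1 L2)
    (g : Equiv.Perm S1) (hg1 : L1.InAut g) (hg2 : L2.InAut g) (hne : g ≠ 1)
    (a b c : S1) (hab : a ≠ b) (hac : a ≠ c) (hbc : b ≠ c)
    (ha : g a = a) (hb : g b = b) (hc : g c = c) :
    ∃! GH : Set GoodInt × Set GoodInt,
      L1.IsGap GH.1 ∧ (∀ I ∈ GH.1, L1.HasSideSeq I) ∧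
      L2.IsGap GH.2 ∧ (∀ I ∈ GH.2, L2.HasSideSeq I) ∧
      Interleave GH.1 GH.2 ∧ MapsGapOnto g GH.1 ∧ MapsGapOnto g GH.2 ∧
      gapVerts GH.1 ∪ gapVerts GH.2 = FixSet g := by
  have hcyc : CycMap g := hg1.1.cycMap
  have hthree : ∀ u v : S1, ∃ c, g c = c ∧ c ≠ u ∧ c ≠ v := by
    intro u v
    by_contra! hcon
    have h1 := hcon a ha
    have h2 := hcon b hb
    have h3 := hcon c hc
    grind
  have hE : ∀ x ∈ L1.E, x ∉ L2.E := fun x h1 h2 => by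
    have : x ∈ L1.E ∩ L2.E := ⟨h1, h2⟩
    rwa [hpf.transverse] at this
  have hfree1 : ∀ I : GoodInt, ∃ e ∈ I.carrier, e ∉ L1.E := fun I => by
    obtain ⟨e, h1, h2⟩ := LamSys.E_dense hpf.qf2 I
    exact ⟨e, h1, fun h3 => hE e h3 h2⟩
  have hfree2 : ∀ I : GoodInt, ∃ e ∈ I.carrier, e ∉ L2.E := fun I => by
    obtain ⟨e, h1, h2⟩ := LamSys.E_dense hpf.qf1 I
    exact ⟨e, h1, hE e h2⟩
  have hmap : ∀ I : GoodInt, (I.map g.symm).map g = I := fun I => GoodInt.ext' (by simp) (by simp)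
  have hacts : ActsPair L1 L2 g :=
    ⟨⟨hcyc, hpf.qf1, hpf.loose1, hfree1, fun I hI => hg1.map_mem hI, fun I hI =>
        LamSys.mem_of_map hpf.qf1 hpf.loose1 hfree1 hcyc (fun I hI => hg1.map_mem hI)
          ((hmap I).symm ▸ hI), hthree⟩,
      ⟨hcyc, hpf.qf2, hpf.loose2, hfree2, fun I hI => hg2.map_mem hI, fun I hI =>
        LamSys.mem_of_map hpf.qf2 hpf.loose2 hfree2 hcyc (fun I hI => hg2.map_mem hI)
          ((hmap I).symm ▸ hI), hthree⟩, hE⟩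
  obtain ⟨z, hz⟩ : ∃ z, g z ≠ z := by
    by_contra! hcon
    exact hne (Equiv.ext hcon)
  obtain ⟨u, v, hC, -⟩ := exists_comp hcyc ha hb hab hz
  obtain ⟨M, hM⟩ := hacts.exists_span hC
  obtain ⟨M', hM'⟩ := hacts.swap.exists_span hC
  obtain ⟨G, hG, hS⟩ := hacts.exists_gap hM
  obtain ⟨H, hH, hT⟩ := hacts.swap.exists_gap hM'
  have hv1 := hacts.existsUnique_vert hH hS hT
  have hv2 := hacts.swap.existsUnique_vert hG hT hS
  have hF : gapVerts G ∪ gapVerts H = FixSet g := by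
    refine Subset.antisymm (union_subset (fun z hz => hacts.verts_fix hG hS hz)
      fun z hz => hacts.swap.verts_fix hH hT hz) fun z hz => ?_
    by_contra hcon
    obtain ⟨N, hN, hzN⟩ := not_mem_gapVerts.1 fun h => hcon (Or.inl h)
    exact hcon (Or.inr (hacts.fix_mem_verts hS hT hN hzN hz))
  refine ⟨(G, H), ⟨hG, fun I hI => (hS I hI).2.2.1, hH, fun I hI => (hT I hI).2.2.1, ⟨hv1, hv2⟩,
    mapsGapOnto_of_span hcyc hS, mapsGapOnto_of_span hcyc hT, hF⟩, ?_⟩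
  rintro ⟨G', H'⟩ ⟨hG', -, hH', -, ⟨hv1', hv2'⟩, -, -, hF'⟩
  have e1 := hG'.eq_of_subset (hpf.qf1 _ hG) (gap_subset hE hpf.qf1 hpf.qf2 hG hG' hH' hv1 hv1' hF hF')
  have e2 := hH'.eq_of_subset (hpf.qf2 _ hH) (gap_subset hacts.swap.disj hpf.qf2 hpf.qf1 hH hH' hG'
    hv2 hv2' (by rw [union_comm]; exact hF) (by rw [union_comm]; exact hF'))
  rw [e1, e2]

end Veering
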